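/- arXiv:1904.10919 — 2 statements merged into one kernel-verified Lean document; each statement's English description precedes it below -/
import Mathlib

section
/- Let n ≥ 2, let X be B or C, let A be the Cartan matrix of type X_n and ι an admissible sequence adapted to A. Let T = [j_1,…,j_k]^X_s ∈ Tab_{X,ι} and t ∈ [1,n−1], and suppose there exists i' ∈ [1,k] with j_{i'} = ovl(t+1) and j_{i'+1} ≠ ovl(t). Set M := s+k−i'+n−t+P(t). Then M ≥ 1 and: (1) the coefficient of x_{M,t} in T is 0, 1 or 2; (2) this coefficient is 0 if and only if j_{i'−n+t+1} = t+1 and j_{i'−n+t} ≠ t; (3) this coefficient is 2 if and only if j_{i'−n+t+1} ≠ t+1 and j_{i'−n+t} = t; and (4) if this coefficient is 1, then S_{M,t}T equals the tableau obtained from T by replacing the entry j_{i'} = ovl(t+1) by ovl(t). -/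
noncomputable section

/-- The coordinate linear form `x_k` (as a coefficient vector). -/
def xc (k : ℕ) : ℕ → ℚ := fun l => if l = k then 1 else 0

/-- Cartan matrix of type `A_n`. -/
def cartanA (_n : ℕ) (i j : ℕ) : ℤ :=
  if i = j then 2 else if i + 1 = j ∨ j + 1 = i then -1 else 0

/-- Cartan matrix of type `B_n`. -/
def cartanB (n : ℕ) (i j : ℕ) : ℤ :=
  if i = j then 2
  else if i = n ∧ j = n - 1 then -2
  else if i + 1 = j ∨ j + 1 = i then -1 else 0

/-- Cartan matrix of type `C_n`. -/
def cartanC (n : ℕ) (i j : ℕ) : ℤ :=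
  if i = j then 2
  else if i = n - 1 ∧ j = n then -2
  else if i + 1 = j ∨ j + 1 = i then -1 else 0

/-- Cartan matrix of type `D_n`. -/
def cartanD (n : ℕ) (i j : ℕ) : ℤ :=
  if i = j then 2
  else if (i = n - 1 ∧ j = n) ∨ (i = n ∧ j = n - 1) then 0
  else if (i + 1 = j ∨ j + 1 = i) ∨ (i = n ∧ j = n - 2) ∨ (i = n - 2 ∧ j = n) then -1
  else 0

/-- `ι` (with positions indexed by `k ≥ 1`) takes values in `{1,…,n}`, has no two equal
consecutive entries, and every index occurs infinitely often. -/
def Admissible (n : ℕ) (ι : ℕ → ℕ) : Prop :=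
  (∀ k, 1 ≤ k → 1 ≤ ι k ∧ ι k ≤ n) ∧
  (∀ k, 1 ≤ k → ι k ≠ ι (k + 1)) ∧
  (∀ i, 1 ≤ i → i ≤ n → ∀ N, ∃ k, N ≤ k ∧ ι k = i)

/-- `k^+`: the next position after `k` carrying the same letter. -/
def kplus (ι : ℕ → ℕ) (k : ℕ) : ℕ := sInf {l | k < l ∧ ι l = ι k}

/-- `k^-`: the previous position (`≥ 1`) carrying the same letter, `0` if none. -/
def kminus (ι : ℕ → ℕ) (k : ℕ) : ℕ := sSup {l | 0 < l ∧ l < k ∧ ι l = ι k}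

/-- The linear form `β_k` (with `β_0 = 0`). -/
def beta (A : ℕ → ℕ → ℤ) (ι : ℕ → ℕ) (k : ℕ) : ℕ → ℚ :=
  if k = 0 then 0
  else xc k + (∑ j ∈ Finset.Ioo k (kplus ι k), (A (ι k) (ι j) : ℚ) • xc j) + xc (kplus ι k)

/-- The piecewise-linear operator `S_k`. -/
def Sop (A : ℕ → ℕ → ℤ) (ι : ℕ → ℕ) (k : ℕ) (φ : ℕ → ℚ) : ℕ → ℚ :=
  if 0 < φ k then φ - φ k • beta A ι k
  else φ - φ k • beta A ι (kminus ι k)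

/-- Membership in `Ξ_ι`: forms obtained from some `x_{j_0}` by finitely many operators `S_k`. -/
inductive XiMem (A : ℕ → ℕ → ℤ) (ι : ℕ → ℕ) : (ℕ → ℚ) → Prop
  | base (k : ℕ) (hk : 1 ≤ k) : XiMem A ι (xc k)
  | step (k : ℕ) (hk : 1 ≤ k) (φ : ℕ → ℚ) (h : XiMem A ι φ) : XiMem A ι (Sop A ι k φ)

/-- The set `Ξ_ι`. -/
def Xi (A : ℕ → ℕ → ℤ) (ι : ℕ → ℕ) : Set (ℕ → ℚ) := { φ | XiMem A ι φ }

/-- Forms obtained from a set `g` of generators by finitely many operators `S_k`. -/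
inductive XiMemFrom (A : ℕ → ℕ → ℤ) (ι : ℕ → ℕ) (g : Set (ℕ → ℚ)) : (ℕ → ℚ) → Prop
  | base (φ : ℕ → ℚ) (h : φ ∈ g) : XiMemFrom A ι g φ
  | step (k : ℕ) (hk : 1 ≤ k) (φ : ℕ → ℚ) (h : XiMemFrom A ι g φ) :
      XiMemFrom A ι g (Sop A ι k φ)

/-- `ι` is adapted to the Cartan matrix `A`: for `i ≠ j` with `a_{i,j} ≠ 0`, consecutive
members of the subsequence of `ι` consisting of the letters `i`, `j` are distinct. -/
def Adapted (n : ℕ) (A : ℕ → ℕ → ℤ) (ι : ℕ → ℕ) : Prop :=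
  ∀ i j, 1 ≤ i → i ≤ n → 1 ≤ j → j ≤ n → i ≠ j → A i j ≠ 0 →
    ∀ k l, 1 ≤ k → k < l → (ι k = i ∨ ι k = j) → (ι l = i ∨ ι l = j) →
      (∀ m, k < m → m < l → ι m ≠ i ∧ ι m ≠ j) → ι k ≠ ι l

/-- Position of the first occurrence of the letter `i` in `ι`. -/
def firstOcc (ι : ℕ → ℕ) (i : ℕ) : ℕ := sInf {k | 1 ≤ k ∧ ι k = i}

/-- `p_{i,j} = 1` iff the first occurrence of `i` precedes the first occurrence of `j`. -/
def pval (ι : ℕ → ℕ) (i j : ℕ) : ℕ := if firstOcc ι i < firstOcc ι j then 1 else 0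

/-- The function `P(k)` for types A, B, C (and `P(k) = 0` for `k > n`, `k ≤ 1`). -/
def PABC (ι : ℕ → ℕ) (n k : ℕ) : ℕ :=
  if k ≤ n then ∑ t ∈ Finset.Icc 2 k, pval ι t (t - 1) else 0

/-- The function `P(k)` for type D. -/
def PD (ι : ℕ → ℕ) (n k : ℕ) : ℕ :=
  if k = n then (∑ t ∈ Finset.Icc 2 (n - 2), pval ι t (t - 1)) + pval ι n (n - 2)
  else if k ≤ n then ∑ t ∈ Finset.Icc 2 k, pval ι t (t - 1) else 0

/-- `occPos ι j s`: the position of the `s`-th occurrence of the letter `j` in `ι`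
(`0` for `s = 0`). -/
def occPos (ι : ℕ → ℕ) (j : ℕ) : ℕ → ℕ
  | 0 => 0
  | s + 1 => sInf {k | occPos ι j s < k ∧ ι k = j}

/-- The double-indexed coordinate form `x_{s,j}`, with the conventions
`x_{s,0} = x_{s,n+1} = 0` and `x_{s,j} = 0` for `s ≤ 0`. -/
def xsj (ι : ℕ → ℕ) (n : ℕ) (s : ℤ) (j : ℕ) : ℕ → ℚ :=
  if 1 ≤ s ∧ 1 ≤ j ∧ j ≤ n then xc (occPos ι j s.toNat) else 0

/-- The double-indexed form `β_{s,j}`. -/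
def betasj (A : ℕ → ℕ → ℤ) (ι : ℕ → ℕ) (s : ℤ) (j : ℕ) : ℕ → ℚ :=
  beta A ι (occPos ι j s.toNat)

/-- The double-indexed operator `S_{m,j}`. -/
def Ssj (A : ℕ → ℕ → ℤ) (ι : ℕ → ℕ) (m j : ℕ) (φ : ℕ → ℚ) : ℕ → ℚ :=
  Sop A ι (occPos ι j m) φ

/- Entries of the ordered sets `J_X` are encoded as natural numbers:
an unbarred entry `j ∈ {1,…,n}` is encoded as `j`, a barred entry `j̄` is
encoded as `2n+1-j` (so that `n̄ = n+1, …, 1̄ = 2n` and the total order of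
`J_B = J_C` is the numerical order), and the extra symbol `ovl(n+1)` of
types C and D is encoded as `0`. -/

/-- The box of type A. -/
def boxA (ι : ℕ → ℕ) (n : ℕ) (s : ℤ) (j : ℕ) : ℕ → ℚ :=
  xsj ι n (s + (PABC ι n j : ℤ)) j - xsj ι n (s + (PABC ι n (j - 1) : ℤ) + 1) (j - 1)

/-- The box of type B. -/
def boxB (ι : ℕ → ℕ) (n : ℕ) (s : ℤ) (e : ℕ) : ℕ → ℚ :=
  if e ≤ n then
    xsj ι n (s + (PABC ι n e : ℤ)) e - xsj ι n (s + (PABC ι n (e - 1) : ℤ) + 1) (e - 1)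
  else
    xsj ι n (s + (PABC ι n (2 * n - e) : ℤ) + (n : ℤ) - ((2 * n + 1 - e : ℕ) : ℤ) + 1)
        (2 * n - e)
      - xsj ι n (s + (PABC ι n (2 * n + 1 - e) : ℤ) + (n : ℤ) - ((2 * n + 1 - e : ℕ) : ℤ) + 1)
          (2 * n + 1 - e)

/-- The box of type C (`ovl(n+1)` encoded as `0`). -/
def boxC (ι : ℕ → ℕ) (n : ℕ) (s : ℤ) (e : ℕ) : ℕ → ℚ :=
  if e = 0 then xsj ι n (s + (PABC ι n n : ℤ)) n
  else if e < n then
    xsj ι n (s + (PABC ι n e : ℤ)) e - xsj ι n (s + (PABC ι n (e - 1) : ℤ) + 1) (e - 1)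
  else if e = n then
    (2 : ℚ) • xsj ι n (s + (PABC ι n n : ℤ)) n
      - xsj ι n (s + (PABC ι n (n - 1) : ℤ) + 1) (n - 1)
  else if e = n + 1 then
    xsj ι n (s + (PABC ι n (n - 1) : ℤ) + 1) (n - 1)
      - (2 : ℚ) • xsj ι n (s + (PABC ι n n : ℤ) + 1) n
  else
    xsj ι n (s + (PABC ι n (2 * n - e) : ℤ) + (n : ℤ) - ((2 * n + 1 - e : ℕ) : ℤ) + 1)
        (2 * n - e)
      - xsj ι n (s + (PABC ι n (2 * n + 1 - e) : ℤ) + (n : ℤ) - ((2 * n + 1 - e : ℕ) : ℤ) + 1)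
          (2 * n + 1 - e)

/-- The box of type D (`ovl(n+1)` encoded as `0`, `n̄` as `n+1`, `ovl(n-1)` as `n+2`). -/
def boxD (ι : ℕ → ℕ) (n : ℕ) (s : ℤ) (e : ℕ) : ℕ → ℚ :=
  if e = 0 then xsj ι n (s + (PD ι n n : ℤ)) n
  else if e ≤ n - 2 then
    xsj ι n (s + (PD ι n e : ℤ)) e - xsj ι n (s + (PD ι n (e - 1) : ℤ) + 1) (e - 1)
  else if e = n - 1 then
    xsj ι n (s + (PD ι n (n - 1) : ℤ)) (n - 1) + xsj ι n (s + (PD ι n n : ℤ)) n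
      - xsj ι n (s + (PD ι n (n - 2) : ℤ) + 1) (n - 2)
  else if e = n then
    xsj ι n (s + (PD ι n n : ℤ)) n - xsj ι n (s + (PD ι n (n - 1) : ℤ) + 1) (n - 1)
  else if e = n + 1 then
    xsj ι n (s + (PD ι n (n - 1) : ℤ)) (n - 1) - xsj ι n (s + (PD ι n n : ℤ) + 1) n
  else if e = n + 2 then
    xsj ι n (s + (PD ι n (n - 2) : ℤ) + 1) (n - 2)
      - xsj ι n (s + (PD ι n (n - 1) : ℤ) + 1) (n - 1)
      - xsj ι n (s + (PD ι n n : ℤ) + 1) n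
  else
    xsj ι n (s + (PD ι n (2 * n - e) : ℤ) + (n : ℤ) - ((2 * n + 1 - e : ℕ) : ℤ)) (2 * n - e)
      - xsj ι n (s + (PD ι n (2 * n + 1 - e) : ℤ) + (n : ℤ) - ((2 * n + 1 - e : ℕ) : ℤ))
          (2 * n + 1 - e)

/-- The column tableau `[j_1,…,j_k]_s = Σ_{i=1}^k box_{s+k-i}(j_i)`. -/
def tab (box : ℤ → ℕ → ℕ → ℚ) (s : ℤ) (k : ℕ) (j : ℕ → ℕ) : ℕ → ℚ :=
  ∑ i ∈ Finset.Icc 1 k, box (s + (k : ℤ) - (i : ℤ)) (j i)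

/-- The set `Tab_{A,ι}`. -/
def TabA (ι : ℕ → ℕ) (n : ℕ) : Set (ℕ → ℚ) :=
  { T | ∃ (k : ℕ) (s : ℤ) (j : ℕ → ℕ),
      1 ≤ k ∧ k ≤ n ∧
      (∀ i, 1 ≤ i → i ≤ k → 1 ≤ j i ∧ j i ≤ n + 1) ∧
      (∀ i, 1 ≤ i → i < k → j i < j (i + 1)) ∧
      1 - (PABC ι n k : ℤ) ≤ s ∧
      T = tab (boxA ι n) s k j }

/-- `|·|` on encoded entries of `J_B = J_C`. -/
def absJ (n e : ℕ) : ℕ := if e ≤ n then e else 2 * n + 1 - e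

/-- The set `Tab_{B,ι}`. -/
def TabB (ι : ℕ → ℕ) (n : ℕ) : Set (ℕ → ℚ) :=
  { T | ∃ (k : ℕ) (s : ℤ) (j : ℕ → ℕ),
      1 ≤ k ∧ k ≤ n ∧
      (∀ i, 1 ≤ i → i ≤ k → 1 ≤ j i ∧ j i ≤ 2 * n) ∧
      (∀ i, 1 ≤ i → i < k → j i < j (i + 1)) ∧
      (k = n → ∀ l m, 1 ≤ l → l < m → m ≤ k → absJ n (j l) ≠ absJ n (j m)) ∧
      1 - (PABC ι n k : ℤ) ≤ s ∧
      T = tab (boxB ι n) s k j }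

/-- Defining conditions of `Tab_{C,ι}` on the data `(k,s,j)`. -/
def TabCcond (ι : ℕ → ℕ) (n : ℕ) (k : ℕ) (s : ℤ) (j : ℕ → ℕ) : Prop :=
  (1 ≤ k ∧ k ≤ n - 1 ∧
    (∀ i, 1 ≤ i → i ≤ k → 1 ≤ j i ∧ j i ≤ 2 * n) ∧
    (∀ i, 1 ≤ i → i < k → j i < j (i + 1)) ∧
    1 - (PABC ι n k : ℤ) ≤ s)
  ∨
  (j 1 = 0 ∧ 1 ≤ k ∧ k ≤ n + 1 ∧
    (∀ i, 2 ≤ i → i ≤ k → n + 1 ≤ j i ∧ j i ≤ 2 * n) ∧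
    (∀ i, 2 ≤ i → i < k → j i < j (i + 1)) ∧
    1 - (PABC ι n n : ℤ) ≤ s)

/-- The set `Tab_{C,ι}`. -/
def TabC (ι : ℕ → ℕ) (n : ℕ) : Set (ℕ → ℚ) :=
  { T | ∃ k s j, TabCcond ι n k s j ∧ T = tab (boxC ι n) s k j }

/-- The partial order on (encoded) `J_D`: `a ≤ b` iff `a = b`, or `a < b` numerically and
`(a,b)` is not the incomparable pair `(n, n̄)`. -/
def leD (n a b : ℕ) : Prop := a = b ∨ (a < b ∧ ¬(a = n ∧ b = n + 1))

/-- Defining conditions of `Tab_{D,ι}` on the data `(k,s,j)`. -/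
def TabDcond (ι : ℕ → ℕ) (n : ℕ) (k : ℕ) (s : ℤ) (j : ℕ → ℕ) : Prop :=
  (1 ≤ k ∧ k ≤ n - 2 ∧
    (∀ i, 1 ≤ i → i ≤ k → 1 ≤ j i ∧ j i ≤ 2 * n) ∧
    (∀ i, 1 ≤ i → i < k → ¬ leD n (j (i + 1)) (j i)) ∧
    1 - (PD ι n k : ℤ) ≤ s)
  ∨
  (j 1 = 0 ∧ 1 ≤ k ∧ k ≤ n + 1 ∧
    (∀ i, 2 ≤ i → i ≤ k → n + 1 ≤ j i ∧ j i ≤ 2 * n) ∧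
    (∀ i, 2 ≤ i → i < k → j i < j (i + 1)) ∧
    (k % 2 = 0 → 1 - (PD ι n (n - 1) : ℤ) ≤ s) ∧
    (k % 2 = 1 → 1 - (PD ι n n : ℤ) ≤ s))

/-- The set `Tab_{D,ι}`. -/
def TabD (ι : ℕ → ℕ) (n : ℕ) : Set (ℕ → ℚ) :=
  { T | ∃ k s j, TabDcond ι n k s j ∧ T = tab (boxD ι n) s k j }

end

section helpers

theorem occ_spec {n : ℕ} {ι : ℕ → ℕ} (hadm : Admissible n ι) {i : ℕ} (h1 : 1 ≤ i) (h2 : i ≤ n)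
    (s : ℕ) : occPos ι i s < occPos ι i (s + 1) ∧ ι (occPos ι i (s + 1)) = i ∧
      ∀ q, occPos ι i s < q → ι q = i → occPos ι i (s + 1) ≤ q := by
  have hne : {k | occPos ι i s < k ∧ ι k = i}.Nonempty := by
    obtain ⟨k, hk, hk'⟩ := hadm.2.2 i h1 h2 (occPos ι i s + 1)
    exact ⟨k, hk, hk'⟩
  have hm := Nat.sInf_mem hne
  refine ⟨hm.1, hm.2, fun q hq hq' => Nat.sInf_le ⟨hq, hq'⟩⟩

theorem occ_mono {n : ℕ} {ι : ℕ → ℕ} (hadm : Admissible n ι) {i : ℕ} (h1 : 1 ≤ i) (h2 : i ≤ n) :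
    StrictMono (occPos ι i) :=
  strictMono_nat_of_lt_succ fun s => (occ_spec hadm h1 h2 s).1

theorem occ_letter {n : ℕ} {ι : ℕ → ℕ} (hadm : Admissible n ι) {i : ℕ} (h1 : 1 ≤ i) (h2 : i ≤ n)
    {s : ℕ} (hs : 1 ≤ s) : ι (occPos ι i s) = i := by
  obtain ⟨s, rfl⟩ := Nat.exists_eq_add_of_le' hs
  exact (occ_spec hadm h1 h2 s).2.1

theorem occ_pos {n : ℕ} {ι : ℕ → ℕ} (hadm : Admissible n ι) {i : ℕ} (h1 : 1 ≤ i) (h2 : i ≤ n)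
    {s : ℕ} (hs : 1 ≤ s) : 1 ≤ occPos ι i s := by
  have := occ_mono hadm h1 h2 (show 0 < s from hs)
  omega

/-- Between consecutive occurrences of `i` there is an occurrence of `j`. -/
theorem between {n : ℕ} {ι : ℕ → ℕ} {A : ℕ → ℕ → ℤ} (hadm : Admissible n ι)
    (had : Adapted n A ι) {i j : ℕ} (hi1 : 1 ≤ i) (hi2 : i ≤ n) (hj1 : 1 ≤ j) (hj2 : j ≤ n)
    (hij : i ≠ j) (hA : A i j ≠ 0 ∨ A j i ≠ 0) (s : ℕ) :
    ∃ q, occPos ι i (s + 1) < q ∧ q < occPos ι i (s + 2) ∧ ι q = j := by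
  by_contra! hcon
  have l1 := (occ_spec hadm hi1 hi2 s).2.1
  obtain ⟨h0, l2, hmin⟩ := occ_spec hadm hi1 hi2 (s + 1)
  have hp := occ_pos hadm hi1 hi2 (show 1 ≤ s + 1 by omega)
  have hno : ∀ m, occPos ι i (s + 1) < m → m < occPos ι i (s + 2) → ι m ≠ i ∧ ι m ≠ j := by
    intro m hm hm'
    refine ⟨fun h => ?_, hcon m hm hm'⟩
    have := hmin m hm h
    have e : s + 2 = s + 1 + 1 := rfl
    rw [e] at hm'
    omega
  rcases hA with hA | hA
  · exact had i j hi1 hi2 hj1 hj2 hij hA _ _ hp h0 (Or.inl l1) (Or.inl l2) hno (l1.trans l2.symm)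
  · exact had j i hj1 hj2 hi1 hi2 hij.symm hA _ _ hp h0 (Or.inr l1) (Or.inr l2)
      (fun m a b => (hno m a b).symm) (l1.trans l2.symm)

theorem interlace {n : ℕ} {ι : ℕ → ℕ} {A : ℕ → ℕ → ℤ} (hadm : Admissible n ι)
    (had : Adapted n A ι) {i j : ℕ} (hi1 : 1 ≤ i) (hi2 : i ≤ n) (hj1 : 1 ≤ j) (hj2 : j ≤ n)
    (hij : i ≠ j) (hA : A i j ≠ 0 ∨ A j i ≠ 0) (hf : firstOcc ι i < firstOcc ι j) (s : ℕ) :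
    occPos ι j s < occPos ι i (s + 1) ∧ occPos ι i (s + 1) < occPos ι j (s + 1) := by
  induction s with
  | zero =>
    refine ⟨(occ_spec hadm hi1 hi2 0).1, hf⟩
  | succ s ih =>
    obtain ⟨q, a, b, c⟩ := between hadm had hi1 hi2 hj1 hj2 hij hA s
    have h1 := (occ_spec hadm hj1 hj2 s).2.2 q (by omega) c
    obtain ⟨q', a', b', c'⟩ := between hadm had hj1 hj2 hi1 hi2 hij.symm hA.symm s
    have h2 := (occ_spec hadm hi1 hi2 (s + 1)).2.2 q' (by omega) c'
    constructor
    · exact lt_of_le_of_lt h1 b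
    · exact lt_of_le_of_lt h2 b'

theorem mid {n : ℕ} {ι : ℕ → ℕ} {A : ℕ → ℕ → ℤ} (hadm : Admissible n ι)
    (had : Adapted n A ι) {i j : ℕ} (hi1 : 1 ≤ i) (hi2 : i ≤ n) (hj1 : 1 ≤ j) (hj2 : j ≤ n)
    (hij : i ≠ j) (hA : A i j ≠ 0 ∨ A j i ≠ 0) (s p : ℕ) :
    ((occPos ι i (s + 1) < p ∧ p < occPos ι i (s + 2)) ∧ ι p = j) ↔
      p = occPos ι j (s + 1 + pval ι j i) := by
  have hfne : firstOcc ι i ≠ firstOcc ι j := by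
    intro h
    have a : ι (firstOcc ι i) = i := occ_letter hadm hi1 hi2 (le_refl 1)
    have b : ι (firstOcc ι j) = j := occ_letter hadm hj1 hj2 (le_refl 1)
    rw [h] at a
    exact hij (a.symm.trans b)
  unfold pval
  split_ifs with hc
  · have I1 := interlace hadm had hj1 hj2 hi1 hi2 hij.symm hA.symm hc s
    have I2 := interlace hadm had hj1 hj2 hi1 hi2 hij.symm hA.symm hc (s + 1)
    have I3 := interlace hadm had hj1 hj2 hi1 hi2 hij.symm hA.symm hc (s + 2)
    have S1 := occ_spec hadm hj1 hj2 (s + 1)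
    have S2 := occ_spec hadm hj1 hj2 (s + 2)
    simp only [show s + 1 + 1 = s + 2 from rfl, show s + 2 + 1 = s + 3 from rfl] at *
    constructor
    · rintro ⟨⟨a, b⟩, c⟩
      have := S1.2.2 p (by omega) c
      by_contra hne
      have := S2.2.2 p (by omega) c
      omega
    · rintro rfl
      exact ⟨⟨by omega, by omega⟩, S1.2.1⟩
  · have hc' : firstOcc ι i < firstOcc ι j := by omega
    have I1 := interlace hadm had hi1 hi2 hj1 hj2 hij hA hc' s
    have I2 := interlace hadm had hi1 hi2 hj1 hj2 hij hA hc' (s + 1)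
    have S1 := occ_spec hadm hj1 hj2 s
    have S2 := occ_spec hadm hj1 hj2 (s + 1)
    simp only [show s + 1 + 1 = s + 2 from rfl, add_zero] at *
    constructor
    · rintro ⟨⟨a, b⟩, c⟩
      have := S1.2.2 p (by omega) c
      by_contra hne
      have := S2.2.2 p (by omega) c
      omega
    · rintro rfl
      exact ⟨⟨by omega, by omega⟩, S1.2.1⟩

theorem kplus_occ {n : ℕ} {ι : ℕ → ℕ} (hadm : Admissible n ι) {i : ℕ} (h1 : 1 ≤ i) (h2 : i ≤ n)
    (s : ℕ) : kplus ι (occPos ι i (s + 1)) = occPos ι i (s + 2) := by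
  unfold kplus
  rw [occ_letter hadm h1 h2 (show 1 ≤ s + 1 by omega)]
  rfl

theorem sum_xc (S : Finset ℕ) (f : ℕ → ℚ) (p : ℕ) :
    (∑ j ∈ S, f j • xc j) p = if p ∈ S then f p else 0 := by
  simp [Finset.sum_apply, xc]

theorem beta_occ {n : ℕ} {ι : ℕ → ℕ} {A : ℕ → ℕ → ℤ} (hadm : Admissible n ι)
    (had : Adapted n A ι) {t : ℕ} (ht1 : 1 ≤ t) (ht2 : t + 1 ≤ n) (a : ℤ) (ha : a ≠ 0)
    (hA1 : 2 ≤ t → A t (t - 1) = -1) (hA2 : A t (t + 1) = -a)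
    (hA0 : ∀ j, j ≠ t → j ≠ t + 1 → j + 1 ≠ t → A t j = 0) (M : ℤ) (hM : 1 ≤ M) :
    beta A ι (occPos ι t M.toNat) = xsj ι n M t + xsj ι n (M + 1) t
      - xsj ι n (M + 1 - (pval ι t (t - 1) : ℤ)) (t - 1)
      - (a : ℚ) • xsj ι n (M + (pval ι (t + 1) t : ℤ)) (t + 1) := by
  obtain ⟨s, rfl⟩ : ∃ s : ℕ, M = (s : ℤ) + 1 := ⟨(M - 1).toNat, by omega⟩
  have e1 : ((s : ℤ) + 1).toNat = s + 1 := by omega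
  have e2 : ((s : ℤ) + 1 + 1).toNat = s + 2 := by omega
  have hp := occ_pos hadm ht1 (by omega) (show 1 ≤ s + 1 by omega)
  have hl := occ_letter hadm ht1 (by omega) (show 1 ≤ s + 1 by omega)
  have e3 : ((s : ℤ) + 1 + (pval ι (t + 1) t : ℤ)).toNat = s + 1 + pval ι (t + 1) t := by omega
  have M2 := mid hadm had ht1 (show t ≤ n by omega) (show 1 ≤ t + 1 by omega) ht2
    (show t ≠ t + 1 by omega) (Or.inl (by rw [hA2]; omega)) s
  unfold beta
  rw [e1, if_neg (by omega), kplus_occ hadm ht1 (by omega), hl]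
  have x1 : xsj ι n ((s : ℤ) + 1) t = xc (occPos ι t (s + 1)) := by
    rw [xsj, if_pos ⟨by omega, ht1, by omega⟩, e1]
  have x2 : xsj ι n ((s : ℤ) + 1 + 1) t = xc (occPos ι t (s + 2)) := by
    rw [xsj, if_pos ⟨by omega, ht1, by omega⟩, e2]
  have x3 : xsj ι n ((s : ℤ) + 1 + (pval ι (t + 1) t : ℤ)) (t + 1) =
      xc (occPos ι (t + 1) (s + 1 + pval ι (t + 1) t)) := by
    rw [xsj, if_pos ⟨by omega, by omega, by omega⟩, e3]
  have x4 : ∀ p, xsj ι n ((s : ℤ) + 1 + 1 - (pval ι t (t - 1) : ℤ)) (t - 1) p =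
      if (occPos ι t (s + 1) < p ∧ p < occPos ι t (s + 2)) ∧ ι p + 1 = t then 1 else 0 := by
    intro p
    by_cases h : t = 1
    · subst h
      rw [xsj, if_neg (by omega), if_neg]
      · rfl
      · rintro ⟨⟨h1, -⟩, h2⟩
        have := (hadm.1 p (by omega)).1
        omega
    · have hfne : firstOcc ι t ≠ firstOcc ι (t - 1) := by
        intro h
        have a : ι (firstOcc ι t) = t := occ_letter hadm ht1 (by omega) (le_refl 1)
        have b : ι (firstOcc ι (t - 1)) = t - 1 :=
          occ_letter hadm (by omega) (by omega) (le_refl 1)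
        rw [h] at a
        omega
      have M1 := mid hadm had ht1 (show t ≤ n by omega) (show 1 ≤ t - 1 by omega) (by omega)
        (show t ≠ t - 1 by omega) (Or.inl (by rw [hA1 (by omega)]; omega)) s p
      have e4 : ((s : ℤ) + 1 + 1 - (pval ι t (t - 1) : ℤ)).toNat = s + 1 + pval ι (t - 1) t := by
        unfold pval
        split_ifs <;> push_cast <;> omega
      rw [xsj, if_pos ⟨by unfold pval; split_ifs <;> push_cast <;> omega, by omega, by omega⟩, e4]
      unfold xc
      have : ι p + 1 = t ↔ ι p = t - 1 := by omega
      simp only [this, M1]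
  have hmin := (occ_spec hadm ht1 (show t ≤ n by omega) (s + 1)).2.2
  rw [x1, x2, x3]
  funext p
  simp only [Pi.add_apply, Pi.sub_apply, Pi.smul_apply, smul_eq_mul, x4]
  rw [sum_xc]
  simp only [Finset.mem_Ioo]
  have x5 : xc (occPos ι (t + 1) (s + 1 + pval ι (t + 1) t)) p =
      if (occPos ι t (s + 1) < p ∧ p < occPos ι t (s + 2)) ∧ ι p = t + 1 then 1 else 0 := by
    unfold xc
    simp only [M2]
  rw [x5]
  have key : (if occPos ι t (s + 1) < p ∧ p < occPos ι t (s + 2) then ((A t (ι p) : ℤ) : ℚ) else 0)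
      = - (if (occPos ι t (s + 1) < p ∧ p < occPos ι t (s + 2)) ∧ ι p + 1 = t then 1 else 0)
        - (a : ℚ) * (if (occPos ι t (s + 1) < p ∧ p < occPos ι t (s + 2)) ∧ ι p = t + 1
            then 1 else 0) := by
    by_cases hb : occPos ι t (s + 1) < p ∧ p < occPos ι t (s + 2)
    · have hne : ι p ≠ t := by
        intro h
        have h3 := hmin p hb.1 h
        have h4 := hb.2
        rw [show s + 2 = s + 1 + 1 from rfl] at h4
        omega
      by_cases c1 : ι p + 1 = t
      · have hpp := (hadm.1 p (by omega)).1
        have c1' : ι p = t - 1 := by omega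
        have c2 : ¬ (ι p = t + 1) := by omega
        rw [if_pos hb, if_pos ⟨hb, c1⟩, if_neg (fun h => c2 h.2), c1', hA1 (by omega)]
        simp
      · by_cases c2 : ι p = t + 1
        · rw [if_pos hb, if_neg (fun h => c1 h.2), if_pos ⟨hb, c2⟩, c2, hA2]
          simp
        · rw [if_pos hb, if_neg (fun h => c1 h.2), if_neg (fun h => c2 h.2), hA0 _ hne c2 c1]
          simp
    · rw [if_neg hb, if_neg (fun h => hb h.1), if_neg (fun h => hb h.1)]
      simp
  rw [key]
  ring

theorem xsj_occ {n : ℕ} {ι : ℕ → ℕ} (hadm : Admissible n ι) {t : ℕ} (ht1 : 1 ≤ t) (ht2 : t ≤ n)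
    (M : ℤ) (hM : 1 ≤ M) (s : ℤ) (j : ℕ) :
    xsj ι n s j (occPos ι t M.toNat) = if j = t ∧ s = M then 1 else 0 := by
  unfold xsj
  split_ifs with h1 h2 h2
  · obtain ⟨rfl, rfl⟩ := h2
    simp [xc]
  · unfold xc
    rw [if_neg]
    intro h
    apply h2
    have a := occ_letter hadm ht1 ht2 (show 1 ≤ M.toNat by omega)
    have b := occ_letter hadm h1.2.1 h1.2.2 (show 1 ≤ s.toNat by omega)
    rw [h, b] at a
    subst a
    have := (occ_mono hadm ht1 ht2).injective h
    exact ⟨rfl, by omega⟩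
  · omega
  · rfl

theorem PABC_succ {n : ℕ} (ι : ℕ → ℕ) {t : ℕ} (ht1 : 1 ≤ t) (ht : t + 1 ≤ n) :
    PABC ι n (t + 1) = PABC ι n t + pval ι (t + 1) t := by
  unfold PABC
  rw [if_pos ht, if_pos (by omega), Finset.sum_Icc_succ_top (by omega)]
  simp

theorem PABC_pred {n : ℕ} (ι : ℕ → ℕ) {t : ℕ} (ht1 : 2 ≤ t) (ht : t ≤ n) :
    PABC ι n t = PABC ι n (t - 1) + pval ι t (t - 1) := by
  obtain ⟨u, rfl⟩ := Nat.exists_eq_add_of_le' (show 1 ≤ t by omega)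
  exact PABC_succ ι (by omega) ht

theorem PABC_bound {n : ℕ} (ι : ℕ → ℕ) {t : ℕ} (ht1 : 1 ≤ t) (d : ℕ) (h : t + d ≤ n) :
    PABC ι n t ≤ PABC ι n (t + d) ∧ PABC ι n (t + d) ≤ PABC ι n t + d := by
  induction d with
  | zero => simp
  | succ d ih =>
    have := ih (by omega)
    have e : t + (d + 1) = t + d + 1 := by omega
    have h2 := PABC_succ ι (show 1 ≤ t + d by omega) (show t + d + 1 ≤ n by omega)
    have h3 : pval ι (t + d + 1) (t + d) ≤ 1 := by unfold pval; split_ifs <;> omega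
    rw [e]
    omega

/-- Coefficient of `x_{M,t}` in a box. -/
def boxCoeff (P : ℤ) (n t : ℕ) (M u : ℤ) (e : ℕ) : ℚ :=
  (if e = t ∧ u + P = M then 1 else 0) - (if e = t + 1 ∧ u + P + 1 = M then 1 else 0)
  + (if e = 2 * n - t ∧ u + P + n - t = M then 1 else 0)
  - (if e = 2 * n + 1 - t ∧ u + P + n - t + 1 = M then 1 else 0)

theorem boxB_coeff {n : ℕ} {ι : ℕ → ℕ} (hadm : Admissible n ι) {t : ℕ} (ht1 : 1 ≤ t)
    (ht2 : t + 1 ≤ n) (M : ℤ) (hM : 1 ≤ M) (u : ℤ) (e : ℕ) :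
    boxB ι n u e (occPos ι t M.toNat) = boxCoeff (PABC ι n t) n t M u e := by
  have X := xsj_occ hadm ht1 (show t ≤ n by omega) M hM
  unfold boxB boxCoeff
  split_ifs with h0 <;> simp only [Pi.sub_apply, X] <;> grind

theorem boxC_coeff {n : ℕ} {ι : ℕ → ℕ} (hadm : Admissible n ι) {t : ℕ} (ht1 : 1 ≤ t)
    (ht2 : t + 1 ≤ n) (M : ℤ) (hM : 1 ≤ M) (u : ℤ) (e : ℕ) :
    boxC ι n u e (occPos ι t M.toNat) = boxCoeff (PABC ι n t) n t M u e := by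
  have X := xsj_occ hadm ht1 (show t ≤ n by omega) M hM
  unfold boxC boxCoeff
  split_ifs with h0 <;> simp only [Pi.sub_apply, Pi.smul_apply, smul_eq_mul, X] <;> grind

theorem tab_coeff {n t k i' : ℕ} (ht1 : 1 ≤ t) (ht2 : t + 1 ≤ n) (P s M : ℤ) (jf : ℕ → ℕ)
    (hi1 : 1 ≤ i') (hi2 : i' ≤ k) (hj : jf i' = 2 * n - t)
    (hj' : i' < k → jf (i' + 1) ≠ 2 * n + 1 - t)
    (hM : M = s + (k : ℤ) - (i' : ℤ) + (n : ℤ) - (t : ℤ) + P) :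
    ∑ i ∈ Finset.Icc 1 k, boxCoeff P n t M (s + (k : ℤ) - (i : ℤ)) (jf i) =
      1 + (if 1 ≤ (i' : ℤ) + (t : ℤ) - (n : ℤ) ∧ (i' : ℤ) + (t : ℤ) - (n : ℤ) ≤ (k : ℤ) ∧
                jf ((i' : ℤ) + (t : ℤ) - (n : ℤ)).toNat = t then 1 else 0)
      - (if 1 ≤ (i' : ℤ) + (t : ℤ) + 1 - (n : ℤ) ∧ (i' : ℤ) + (t : ℤ) + 1 - (n : ℤ) ≤ (k : ℤ) ∧
                jf ((i' : ℤ) + (t : ℤ) + 1 - (n : ℤ)).toNat = t + 1 then 1 else 0) := by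
  have gen : ∀ (z : ℤ) (v : ℕ) (Q : ℕ → Prop) [DecidablePred Q], (∀ i, Q i ↔ (i : ℤ) = z) →
      ∑ i ∈ Finset.Icc 1 k, (if jf i = v ∧ Q i then (1 : ℚ) else 0) =
        if 1 ≤ z ∧ z ≤ k ∧ jf z.toNat = v then 1 else 0 := by
    intro z v Q _ hQ
    split_ifs with h
    · rw [Finset.sum_eq_single z.toNat]
      · rw [if_pos ⟨h.2.2, (hQ _).2 (by omega)⟩]
      · intro b _ hb
        rw [if_neg]
        rintro ⟨-, h2⟩
        have := (hQ b).1 h2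
        omega
      · intro hb
        simp only [Finset.mem_Icc] at hb
        omega
    · apply Finset.sum_eq_zero
      intro b hb
      simp only [Finset.mem_Icc] at hb
      rw [if_neg]
      rintro ⟨h1, h2⟩
      have := (hQ b).1 h2
      apply h
      subst this
      exact ⟨by omega, by omega, by simpa using h1⟩
  unfold boxCoeff
  simp only [Finset.sum_sub_distrib, Finset.sum_add_distrib]
  rw [gen ((i' : ℤ) + t - n) t _ (by intro i; omega),
    gen ((i' : ℤ) + t + 1 - n) (t + 1) _ (by intro i; omega),
    gen (i' : ℤ) (2 * n - t) _ (by intro i; omega),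
    gen ((i' : ℤ) + 1) (2 * n + 1 - t) _ (by intro i; omega)]
  rw [if_pos (show 1 ≤ (i' : ℤ) ∧ (i' : ℤ) ≤ k ∧ jf (i' : ℤ).toNat = 2 * n - t from
    ⟨by omega, by omega, by simpa using hj⟩)]
  rw [if_neg (show ¬ (1 ≤ (i' : ℤ) + 1 ∧ (i' : ℤ) + 1 ≤ k ∧
      jf ((i' : ℤ) + 1).toNat = 2 * n + 1 - t) from fun h =>
    hj' (by omega) (by
      have e : ((i' : ℤ) + 1).toNat = i' + 1 := by omega
      rw [← e]; exact h.2.2))]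
  ring

theorem boxB_diff {n : ℕ} {ι : ℕ → ℕ} (hadm : Admissible n ι) (had : Adapted n (cartanB n) ι)
    {t : ℕ} (ht1 : 1 ≤ t) (ht2 : t + 1 ≤ n) (M : ℤ) (hM : 1 ≤ M) (u : ℤ)
    (hu : M = u + n - t + PABC ι n t) :
    boxB ι n u (2 * n + 1 - t) = boxB ι n u (2 * n - t) - beta (cartanB n) ι (occPos ι t M.toNat)
    := by
  rw [beta_occ hadm had ht1 ht2 1 one_ne_zero (by intro h; unfold cartanB; grind)
    (by unfold cartanB; grind) (by intro j; unfold cartanB; grind) M hM]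
  have s1 := PABC_succ ι ht1 ht2
  have z : ∀ m m' : ℤ, (2 ≤ t → m = m') → xsj ι n m (t - 1) = xsj ι n m' (t - 1) := by
    intro m m' h
    by_cases h2 : 2 ≤ t
    · rw [h h2]
    · unfold xsj
      rw [if_neg (by omega), if_neg (by omega)]
  unfold boxB
  rw [if_neg (by omega), if_neg (by omega)]
  have a1 : 2 * n - (2 * n + 1 - t) = t - 1 := by omega
  have a2 : 2 * n + 1 - (2 * n + 1 - t) = t := by omega
  have a3 : 2 * n - (2 * n - t) = t := by omega
  have a4 : 2 * n + 1 - (2 * n - t) = t + 1 := by omega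
  rw [a1, a2, a3, a4, z _ (M + 1 - (pval ι t (t - 1) : ℤ)) (by
    intro h
    have := PABC_pred ι h (show t ≤ n by omega)
    omega)]
  have b1 : u + (PABC ι n t : ℤ) + n - t + 1 = M + 1 := by omega
  have b2 : u + (PABC ι n t : ℤ) + n - ((t + 1 : ℕ) : ℤ) + 1 = M := by omega
  have b3 : u + (PABC ι n (t + 1) : ℤ) + n - ((t + 1 : ℕ) : ℤ) + 1
    = M + (pval ι (t + 1) t : ℤ) := by omega
  rw [b1, b2, b3]
  funext p
  simp only [Pi.sub_apply, Pi.add_apply, Pi.smul_apply, smul_eq_mul]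
  push_cast
  ring

theorem boxC_diff {n : ℕ} {ι : ℕ → ℕ} (hadm : Admissible n ι) (had : Adapted n (cartanC n) ι)
    {t : ℕ} (ht1 : 1 ≤ t) (ht2 : t + 1 ≤ n) (M : ℤ) (hM : 1 ≤ M) (u : ℤ)
    (hu : M = u + n - t + PABC ι n t) :
    boxC ι n u (2 * n + 1 - t) = boxC ι n u (2 * n - t) - beta (cartanC n) ι (occPos ι t M.toNat)
    := by
  rw [beta_occ hadm had ht1 ht2 (if t + 1 = n then 2 else 1) (by split_ifs <;> decide)
    (by intro h; unfold cartanC; grind)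
    (by unfold cartanC; grind) (by intro j; unfold cartanC; grind) M hM]
  have s1 := PABC_succ ι ht1 ht2
  have z : ∀ m m' : ℤ, (2 ≤ t → m = m') → xsj ι n m (t - 1) = xsj ι n m' (t - 1) := by
    intro m m' h
    by_cases h2 : 2 ≤ t
    · rw [h h2]
    · unfold xsj
      rw [if_neg (by omega), if_neg (by omega)]
  have a1 : 2 * n - (2 * n + 1 - t) = t - 1 := by omega
  have a2 : 2 * n + 1 - (2 * n + 1 - t) = t := by omega
  have a3 : 2 * n - (2 * n - t) = t := by omega
  have a4 : 2 * n + 1 - (2 * n - t) = t + 1 := by omega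
  have b1 : u + (PABC ι n t : ℤ) + n - t + 1 = M + 1 := by omega
  have b2 : u + (PABC ι n t : ℤ) + n - ((t + 1 : ℕ) : ℤ) + 1 = M := by omega
  have b3 : u + (PABC ι n (t + 1) : ℤ) + n - ((t + 1 : ℕ) : ℤ) + 1
    = M + (pval ι (t + 1) t : ℤ) := by omega
  have f1 : boxC ι n u (2 * n + 1 - t) = xsj ι n (M + 1 - (pval ι t (t - 1) : ℤ)) (t - 1)
      - xsj ι n (M + 1) t := by
    unfold boxC
    rw [if_neg (by omega), if_neg (by omega), if_neg (by omega), if_neg (by omega), a1, a2,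
      z _ (M + 1 - (pval ι t (t - 1) : ℤ)) (by
        intro h
        have := PABC_pred ι h (show t ≤ n by omega)
        omega), b1]
  rw [f1]
  unfold boxC
  rw [if_neg (by omega), if_neg (by omega), if_neg (by omega)]
  by_cases h : t + 1 = n
  · have c1 : n - 1 = t := by omega
    have c2 : u + (PABC ι n t : ℤ) + 1 = M := by omega
    have c3 : u + (PABC ι n n : ℤ) + 1 = M + (pval ι (t + 1) t : ℤ) := by
      rw [← b3, h]; ring
    rw [if_pos (by omega), if_pos h, c1, c2, c3, h]
    funext p
    simp only [Pi.sub_apply, Pi.add_apply, Pi.smul_apply, smul_eq_mul]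
    push_cast
    ring
  · rw [if_neg (by omega), if_neg h, a3, a4, b2, b3]
    funext p
    simp only [Pi.sub_apply, Pi.add_apply, Pi.smul_apply, smul_eq_mul]
    push_cast
    ring

theorem tab_update (box : ℤ → ℕ → ℕ → ℚ) (s : ℤ) (k : ℕ) (jf : ℕ → ℕ) (i' e : ℕ)
    (hi1 : 1 ≤ i') (hi2 : i' ≤ k) (b : ℕ → ℚ)
    (h : box (s + k - i') e = box (s + k - i') (jf i') - b) :
    tab box s k (Function.update jf i' e) = tab box s k jf - b := by
  unfold tab
  have hm : i' ∈ Finset.Icc 1 k := by simp; omega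
  rw [← Finset.add_sum_erase _ _ hm, ← Finset.add_sum_erase (Finset.Icc 1 k)
    (fun i => box (s + (k : ℤ) - (i : ℤ)) (jf i)) hm]
  have : ∑ x ∈ (Finset.Icc 1 k).erase i', box (s + (k : ℤ) - (x : ℤ)) (Function.update jf i' e x)
      = ∑ x ∈ (Finset.Icc 1 k).erase i', box (s + (k : ℤ) - (x : ℤ)) (jf x) := by
    apply Finset.sum_congr rfl
    intro x hx
    rw [Function.update_of_ne (Finset.ne_of_mem_erase hx)]
  rw [this]
  simp only [Function.update_self]
  rw [h]
  abel

theorem main_aux {n : ℕ} {ι : ℕ → ℕ} {A : ℕ → ℕ → ℤ} (box : ℤ → ℕ → ℕ → ℚ)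
    {t : ℕ} (ht1 : 1 ≤ t) (ht2 : t + 1 ≤ n) (M : ℤ) (hM1 : 1 ≤ M)
    (hco : ∀ u e, box u e (occPos ι t M.toNat) = boxCoeff (PABC ι n t) n t M u e)
    (hdiff : ∀ u : ℤ, M = u + n - t + PABC ι n t → box u (2 * n + 1 - t) =
      box u (2 * n - t) - beta A ι (occPos ι t M.toNat))
    (k : ℕ) (s : ℤ) (jf : ℕ → ℕ) (i' : ℕ)
    (hi1 : 1 ≤ i') (hi2 : i' ≤ k) (hj : jf i' = 2 * n - t)
    (hj' : i' < k → jf (i' + 1) ≠ 2 * n + 1 - t)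
    (hM : M = s + (k : ℤ) - (i' : ℤ) + (n : ℤ) - (t : ℤ) + (PABC ι n t : ℤ))
    (c : ℚ) (hc : c = tab box s k jf (occPos ι t M.toNat)) :
          1 ≤ M ∧
          (c = 0 ∨ c = 1 ∨ c = 2) ∧
          (c = 0 ↔
            ((1 ≤ (i' : ℤ) + (t : ℤ) + 1 - (n : ℤ) ∧ (i' : ℤ) + (t : ℤ) + 1 - (n : ℤ) ≤ (k : ℤ) ∧
                jf ((i' : ℤ) + (t : ℤ) + 1 - (n : ℤ)).toNat = t + 1) ∧
             ¬(1 ≤ (i' : ℤ) + (t : ℤ) - (n : ℤ) ∧ (i' : ℤ) + (t : ℤ) - (n : ℤ) ≤ (k : ℤ) ∧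
                jf ((i' : ℤ) + (t : ℤ) - (n : ℤ)).toNat = t))) ∧
          (c = 2 ↔
            (¬(1 ≤ (i' : ℤ) + (t : ℤ) + 1 - (n : ℤ) ∧ (i' : ℤ) + (t : ℤ) + 1 - (n : ℤ) ≤ (k : ℤ) ∧
                jf ((i' : ℤ) + (t : ℤ) + 1 - (n : ℤ)).toNat = t + 1) ∧
             (1 ≤ (i' : ℤ) + (t : ℤ) - (n : ℤ) ∧ (i' : ℤ) + (t : ℤ) - (n : ℤ) ≤ (k : ℤ) ∧
                jf ((i' : ℤ) + (t : ℤ) - (n : ℤ)).toNat = t))) ∧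
          (c = 1 →
            Ssj A ι M.toNat t (tab box s k jf) =
              tab box s k (Function.update jf i' (2 * n + 1 - t))) := by
  have hc2 := tab_coeff ht1 ht2 (PABC ι n t) s M jf hi1 hi2 hj hj' hM
  have hc3 : c = ∑ i ∈ Finset.Icc 1 k, boxCoeff (PABC ι n t) n t M (s + (k : ℤ) - (i : ℤ)) (jf i)
      := by
    rw [hc, tab, Finset.sum_apply]
    exact Finset.sum_congr rfl fun i _ => hco _ _
  rw [hc2] at hc3
  refine ⟨hM1, ?_, ?_, ?_, ?_⟩
  · rw [hc3]
    split_ifs <;> norm_num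
  · rw [hc3]
    split_ifs with h1 h2 h2 <;> simp only [h1, h2] <;> norm_num
  · rw [hc3]
    split_ifs with h1 h2 h2 <;> simp only [h1, h2] <;> norm_num
  · intro h1
    rw [tab_update box s k jf i' _ hi1 hi2 (beta A ι (occPos ι t M.toNat))
      (by rw [hj]; exact hdiff _ (by omega))]
    unfold Ssj Sop
    rw [← hc, h1, if_pos one_pos, one_smul]

end helpers

/-- Lemma 5.1 (types B and C): behaviour of the coefficient of `x_{M,t}` in a tableau
`T = [j_1,…,j_k]^X_s` having an entry `j_{i'} = ovl(t+1)` (encoded `2n-t`) with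
`j_{i'+1} ≠ ovl(t)` (encoded `2n+1-t`), where `M = s+k-i'+n-t+P(t)`.  Out-of-range
conditions `j_l = t` are regarded as violated.  The coefficient of `x_{M,t}` in `T` is the
value of `T` at the position of the `M`-th occurrence of `t` in `ι`. -/
theorem coeff_barred_BC (n : ℕ) (hn : 2 ≤ n) (ι : ℕ → ℕ) (hadm : Admissible n ι) :
    (Adapted n (cartanB n) ι →
      ∀ (k : ℕ) (s : ℤ) (jf : ℕ → ℕ),
        1 ≤ k → k ≤ n →
        (∀ i, 1 ≤ i → i ≤ k → 1 ≤ jf i ∧ jf i ≤ 2 * n) →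
        (∀ i, 1 ≤ i → i < k → jf i < jf (i + 1)) →
        (k = n → ∀ l m, 1 ≤ l → l < m → m ≤ k → absJ n (jf l) ≠ absJ n (jf m)) →
        1 - (PABC ι n k : ℤ) ≤ s →
        ∀ t, 1 ≤ t → t ≤ n - 1 →
        ∀ i', 1 ≤ i' → i' ≤ k → jf i' = 2 * n - t → (i' < k → jf (i' + 1) ≠ 2 * n + 1 - t) →
        ∀ M : ℤ, M = s + (k : ℤ) - (i' : ℤ) + (n : ℤ) - (t : ℤ) + (PABC ι n t : ℤ) →
        ∀ c : ℚ, c = tab (boxB ι n) s k jf (occPos ι t M.toNat) →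
          1 ≤ M ∧
          (c = 0 ∨ c = 1 ∨ c = 2) ∧
          (c = 0 ↔
            ((1 ≤ (i' : ℤ) + (t : ℤ) + 1 - (n : ℤ) ∧ (i' : ℤ) + (t : ℤ) + 1 - (n : ℤ) ≤ (k : ℤ) ∧
                jf ((i' : ℤ) + (t : ℤ) + 1 - (n : ℤ)).toNat = t + 1) ∧
             ¬(1 ≤ (i' : ℤ) + (t : ℤ) - (n : ℤ) ∧ (i' : ℤ) + (t : ℤ) - (n : ℤ) ≤ (k : ℤ) ∧
                jf ((i' : ℤ) + (t : ℤ) - (n : ℤ)).toNat = t))) ∧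
          (c = 2 ↔
            (¬(1 ≤ (i' : ℤ) + (t : ℤ) + 1 - (n : ℤ) ∧ (i' : ℤ) + (t : ℤ) + 1 - (n : ℤ) ≤ (k : ℤ) ∧
                jf ((i' : ℤ) + (t : ℤ) + 1 - (n : ℤ)).toNat = t + 1) ∧
             (1 ≤ (i' : ℤ) + (t : ℤ) - (n : ℤ) ∧ (i' : ℤ) + (t : ℤ) - (n : ℤ) ≤ (k : ℤ) ∧
                jf ((i' : ℤ) + (t : ℤ) - (n : ℤ)).toNat = t))) ∧
          (c = 1 →
            Ssj (cartanB n) ι M.toNat t (tab (boxB ι n) s k jf) =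
              tab (boxB ι n) s k (Function.update jf i' (2 * n + 1 - t)))) ∧
    (Adapted n (cartanC n) ι →
      ∀ (k : ℕ) (s : ℤ) (jf : ℕ → ℕ),
        TabCcond ι n k s jf →
        ∀ t, 1 ≤ t → t ≤ n - 1 →
        ∀ i', 1 ≤ i' → i' ≤ k → jf i' = 2 * n - t → (i' < k → jf (i' + 1) ≠ 2 * n + 1 - t) →
        ∀ M : ℤ, M = s + (k : ℤ) - (i' : ℤ) + (n : ℤ) - (t : ℤ) + (PABC ι n t : ℤ) →
        ∀ c : ℚ, c = tab (boxC ι n) s k jf (occPos ι t M.toNat) →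
          1 ≤ M ∧
          (c = 0 ∨ c = 1 ∨ c = 2) ∧
          (c = 0 ↔
            ((1 ≤ (i' : ℤ) + (t : ℤ) + 1 - (n : ℤ) ∧ (i' : ℤ) + (t : ℤ) + 1 - (n : ℤ) ≤ (k : ℤ) ∧
                jf ((i' : ℤ) + (t : ℤ) + 1 - (n : ℤ)).toNat = t + 1) ∧
             ¬(1 ≤ (i' : ℤ) + (t : ℤ) - (n : ℤ) ∧ (i' : ℤ) + (t : ℤ) - (n : ℤ) ≤ (k : ℤ) ∧
                jf ((i' : ℤ) + (t : ℤ) - (n : ℤ)).toNat = t))) ∧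
          (c = 2 ↔
            (¬(1 ≤ (i' : ℤ) + (t : ℤ) + 1 - (n : ℤ) ∧ (i' : ℤ) + (t : ℤ) + 1 - (n : ℤ) ≤ (k : ℤ) ∧
                jf ((i' : ℤ) + (t : ℤ) + 1 - (n : ℤ)).toNat = t + 1) ∧
             (1 ≤ (i' : ℤ) + (t : ℤ) - (n : ℤ) ∧ (i' : ℤ) + (t : ℤ) - (n : ℤ) ≤ (k : ℤ) ∧
                jf ((i' : ℤ) + (t : ℤ) - (n : ℤ)).toNat = t))) ∧
          (c = 1 →
            Ssj (cartanC n) ι M.toNat t (tab (boxC ι n) s k jf) =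
              tab (boxC ι n) s k (Function.update jf i' (2 * n + 1 - t)))) := by
  constructor
  · intro had k s jf hk1 hk2 _ _ _ hs t ht1 ht2 i' hi1 hi2 hj hj' M hM c hc
    have ht2' : t + 1 ≤ n := by omega
    have hM1 : 1 ≤ M := by
      rcases le_total k t with h | h
      · obtain ⟨d, rfl⟩ := Nat.exists_eq_add_of_le h
        have := PABC_bound (n := n) ι hk1 d (by omega)
        omega
      · obtain ⟨d, rfl⟩ := Nat.exists_eq_add_of_le h
        have := PABC_bound (n := n) ι ht1 d (by omega)
        omega
    exact main_aux (boxB ι n) ht1 ht2' M hM1 (boxB_coeff hadm ht1 ht2' M hM1)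
      (boxB_diff hadm had ht1 ht2' M hM1) k s jf i' hi1 hi2 hj hj' hM c hc
  · intro had k s jf hT t ht1 ht2 i' hi1 hi2 hj hj' M hM c hc
    have ht2' : t + 1 ≤ n := by omega
    have hM1 : 1 ≤ M := by
      rcases hT with ⟨hk1, hk2, -, -, hs⟩ | ⟨-, -, -, -, -, hs⟩
      · rcases le_total k t with h | h
        · obtain ⟨d, rfl⟩ := Nat.exists_eq_add_of_le h
          have := PABC_bound (n := n) ι hk1 d (by omega)
          omega
        · obtain ⟨d, rfl⟩ := Nat.exists_eq_add_of_le h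
          have := PABC_bound (n := n) ι ht1 d (by omega)
          omega
      · have := PABC_bound (n := n) ι ht1 (n - t) (by omega)
        rw [show t + (n - t) = n by omega] at this
        omega
    exact main_aux (boxC ι n) ht1 ht2' M hM1 (boxC_coeff hadm ht1 ht2' M hM1)
      (boxC_diff hadm had ht1 ht2' M hM1) k s jf i' hi1 hi2 hj hj' hM c hc
end

section
/- Let n ≥ 2, let X be B or C, let A be the Cartan matrix of type X_n and ι an admissible sequence adapted to A. Then for each k ∈ [1,n−1], the set of elements of the form S_{l_p}⋯S_{l_1} x_{r,k} (p ≥ 0, r, l_1,…,l_p ≥ 1) equals the set of tableaux [j_1,…,j_k]^X_s in Tab_{X,ι} all of whose entries j_1,…,j_k lie in J_X (i.e., in type C no entry equals ovl(n+1)). -/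
namespace XiBC

/-- Uniform hypotheses covering types B (`γ = 1`) and C (`γ = 2`). -/
structure Ctx (n : ℕ) (ι : ℕ → ℕ) (A : ℕ → ℕ → ℤ) (γ : ℚ) : Prop where
  hn : 2 ≤ n
  hadm : Admissible n ι
  had : Adapted n A ι
  hγ : 0 < γ
  hA0 : ∀ c d, c ≠ d → c + 1 ≠ d → d + 1 ≠ c → A c d = 0
  hAup : ∀ c, 1 ≤ c → c < n → (A c (c + 1) : ℚ) = -(if c + 1 = n then γ else 1)
  hAdn : ∀ c, 2 ≤ c → c ≤ n →
    (if c = n then γ else 1) * (A c (c - 1) : ℚ) = if c = n then -2 else -1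

section occ
variable {n : ℕ} {ι : ℕ → ℕ}

theorem occ_spec (hadm : Admissible n ι) {c : ℕ} (h1 : 1 ≤ c) (h2 : c ≤ n) (m : ℕ) :
    occPos ι c m < occPos ι c (m + 1) ∧ ι (occPos ι c (m + 1)) = c := by
  have : (sInf {k | occPos ι c m < k ∧ ι k = c}) ∈ {k | occPos ι c m < k ∧ ι k = c} := by
    apply Nat.sInf_mem
    obtain ⟨k, hk, hk'⟩ := hadm.2.2 c h1 h2 (occPos ι c m + 1)
    exact ⟨k, by omega, hk'⟩
  exact this

theorem occ_le (hadm : Admissible n ι) {c : ℕ} (m k : ℕ) (hk : occPos ι c m < k) (hk' : ι k = c) :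
    occPos ι c (m + 1) ≤ k :=
  Nat.sInf_le (show k ∈ {k | occPos ι c m < k ∧ ι k = c} from ⟨hk, hk'⟩)

theorem occ_mono (hadm : Admissible n ι) {c : ℕ} (h1 : 1 ≤ c) (h2 : c ≤ n) : StrictMono (occPos ι c) :=
  strictMono_nat_of_lt_succ fun m => (occ_spec hadm h1 h2 m).1

theorem occ_letter (hadm : Admissible n ι) {c : ℕ} (h1 : 1 ≤ c) (h2 : c ≤ n) {m : ℕ} (hm : 1 ≤ m) :
    ι (occPos ι c m) = c := by
  obtain ⟨m, rfl⟩ : ∃ m', m = m' + 1 := ⟨m - 1, by omega⟩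
  exact (occ_spec hadm h1 h2 m).2

theorem occ_pos (hadm : Admissible n ι) {c : ℕ} (h1 : 1 ≤ c) (h2 : c ≤ n) {m : ℕ} (hm : 1 ≤ m) :
    1 ≤ occPos ι c m := by
  have := occ_mono hadm h1 h2 (show 0 < m by omega)
  omega

theorem occ_between (hadm : Admissible n ι) {c : ℕ} (m k : ℕ) (h : occPos ι c m < k)
    (h' : k < occPos ι c (m + 1)) : ι k ≠ c := by
  intro hk
  have := occ_le hadm m k h hk
  omega

theorem occ_exists (hadm : Admissible n ι) (k : ℕ) (hk : 1 ≤ k) :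
    ∃ m, 1 ≤ m ∧ k = occPos ι (ι k) m := by
  obtain ⟨h1, h2⟩ := hadm.1 k hk
  have hmono := occ_mono hadm h1 h2
  have hex : ∃ m, k ≤ occPos ι (ι k) m := ⟨k, hmono.id_le k⟩
  classical
  have hs := Nat.find_spec hex
  have hmin := fun m => Nat.find_min hex (m := m)
  set M := Nat.find hex
  have hM : M ≠ 0 := by
    intro h0
    rw [h0] at hs
    have : occPos ι (ι k) 0 = 0 := rfl
    omega
  obtain ⟨m, hm⟩ : ∃ m', M = m' + 1 := ⟨M - 1, by omega⟩
  refine ⟨M, by omega, le_antisymm hs ?_⟩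
  rw [hm]
  have := hmin m (by omega)
  exact occ_le hadm m k (by omega) rfl

theorem occ_inj (hadm : Admissible n ι) {c d m r : ℕ} (hc1 : 1 ≤ c) (hc2 : c ≤ n) (hd1 : 1 ≤ d) (hd2 : d ≤ n)
    (hm : 1 ≤ m) (hr : 1 ≤ r) : occPos ι c m = occPos ι d r ↔ c = d ∧ m = r := by
  constructor
  · intro h
    have h3 : c = d := by
      rw [← occ_letter hadm hc1 hc2 hm, h, occ_letter hadm hd1 hd2 hr]
    subst h3
    exact ⟨rfl, (occ_mono hadm hc1 hc2).injective h⟩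
  · rintro ⟨rfl, rfl⟩; rfl

theorem kplus_occ (hadm : Admissible n ι) {c m : ℕ} (h1 : 1 ≤ c) (h2 : c ≤ n) (hm : 1 ≤ m) :
    kplus ι (occPos ι c m) = occPos ι c (m + 1) := by
  unfold kplus
  rw [occ_letter hadm h1 h2 hm]
  rfl

theorem kminus_occ (hadm : Admissible n ι) {c m : ℕ} (h1 : 1 ≤ c) (h2 : c ≤ n) :
    kminus ι (occPos ι c (m + 1)) = occPos ι c m := by
  unfold kminus
  rw [occ_letter hadm h1 h2 (by omega : 1 ≤ m + 1)]
  rcases Nat.eq_zero_or_pos m with rfl | hm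
  · have : {l | 0 < l ∧ l < occPos ι c (0 + 1) ∧ ι l = c} = ∅ := by
      ext l
      simp only [Set.mem_setOf_eq, Set.mem_empty_iff_false, iff_false]
      rintro ⟨a, b, h⟩
      exact occ_between hadm 0 l a b h
    rw [this]
    simp [occPos]
  · apply IsGreatest.csSup_eq
    constructor
    · exact ⟨occ_pos hadm h1 h2 hm, (occ_spec hadm h1 h2 m).1, occ_letter hadm h1 h2 hm⟩
    · rintro l ⟨a, b, h⟩
      by_contra hl
      exact occ_between hadm m l (by omega) b h

theorem inter_aux (hadm : Admissible n ι) {A : ℕ → ℕ → ℤ} (had : Adapted n A ι) {c d : ℕ} (hc1 : 1 ≤ c) (hc2 : c ≤ n)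
    (hd1 : 1 ≤ d) (hd2 : d ≤ n) (hcd : c ≠ d) (hA : A c d ≠ 0) (m r : ℕ)
    (ha : occPos ι d r < occPos ι c (m + 1)) (hb : occPos ι c (m + 1) < occPos ι d (r + 1)) :
    occPos ι d (r + 1) < occPos ι c (m + 2) := by
  by_contra hcon
  have hne : occPos ι d (r + 1) ≠ occPos ι c (m + 2) := by
    rw [Ne, occ_inj hadm hd1 hd2 hc1 hc2 (by omega) (by omega)]
    intro h; exact hcd h.1.symm
  have hl := occ_mono hadm hc1 hc2 (show m + 1 < m + 2 by omega)
  refine had c d hc1 hc2 hd1 hd2 hcd hA (occPos ι c (m + 1)) (occPos ι c (m + 2))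
    (occ_pos hadm hc1 hc2 (by omega)) hl
    (Or.inl (occ_letter hadm hc1 hc2 (by omega))) (Or.inl (occ_letter hadm hc1 hc2 (by omega)))
    ?_ ?_
  · intro q hq hq'
    exact ⟨occ_between hadm (m + 1) q hq hq', occ_between hadm r q (by omega) (by omega)⟩
  · rw [occ_letter hadm hc1 hc2 (by omega), occ_letter hadm hc1 hc2 (by omega)]

theorem inter (hadm : Admissible n ι) {A : ℕ → ℕ → ℤ} (had : Adapted n A ι) {c d : ℕ} (hc1 : 1 ≤ c) (hc2 : c ≤ n)
    (hd1 : 1 ≤ d) (hd2 : d ≤ n) (hcd : c ≠ d) (hA : A c d ≠ 0) (hA' : A d c ≠ 0)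
    (h : firstOcc ι c < firstOcc ι d) (m : ℕ) :
    occPos ι c (m + 1) < occPos ι d (m + 1) ∧ occPos ι d (m + 1) < occPos ι c (m + 2) := by
  induction m with
  | zero =>
    have h1 : occPos ι c (0 + 1) < occPos ι d (0 + 1) := h
    refine ⟨h1, inter_aux hadm had hc1 hc2 hd1 hd2 hcd hA 0 0 ?_ h1⟩
    exact occ_pos hadm hc1 hc2 (by omega)
  | succ m ih =>
    have h1 := inter_aux hadm had hd1 hd2 hc1 hc2 hcd.symm hA' m (m + 1) ih.1 ih.2
    exact ⟨h1, inter_aux hadm had hc1 hc2 hd1 hd2 hcd hA (m + 1) (m + 1) ih.2 h1⟩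

theorem first_ne (hadm : Admissible n ι) {c d : ℕ} (hc1 : 1 ≤ c) (hc2 : c ≤ n)
    (hd1 : 1 ≤ d) (hd2 : d ≤ n) (hcd : c ≠ d) : firstOcc ι c ≠ firstOcc ι d := by
  have := (occ_inj hadm hc1 hc2 hd1 hd2 (le_refl 1) (le_refl 1)).not
  intro h
  exact this.2 (fun h => hcd h.1) h

theorem mem_between (hadm : Admissible n ι) {A : ℕ → ℕ → ℤ} (had : Adapted n A ι) {c d : ℕ} (hc1 : 1 ≤ c) (hc2 : c ≤ n)
    (hd1 : 1 ≤ d) (hd2 : d ≤ n) (hcd : c ≠ d) (hA : A c d ≠ 0) (hA' : A d c ≠ 0)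
    {m r : ℕ} (hm : 1 ≤ m) (hr : 1 ≤ r) :
    (occPos ι c m < occPos ι d r ∧ occPos ι d r < occPos ι c (m + 1)) ↔
      r = m + pval ι d c := by
  have mc := occ_mono hadm hc1 hc2
  have md := occ_mono hadm hd1 hd2
  obtain ⟨m, rfl⟩ : ∃ m', m = m' + 1 := ⟨m - 1, by omega⟩
  obtain ⟨r, rfl⟩ : ∃ m', r = m' + 1 := ⟨r - 1, by omega⟩
  unfold pval
  rcases lt_or_gt_of_ne (first_ne hadm hc1 hc2 hd1 hd2 hcd) with h | h
  · have I := inter hadm had hc1 hc2 hd1 hd2 hcd hA hA' h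
    rw [if_neg (by omega)]
    constructor
    · rintro ⟨a, b⟩
      have h1 : m + 1 < r + 2 := mc.lt_iff_lt.1 (a.trans (I r).2)
      have h2 : r + 1 < m + 2 := mc.lt_iff_lt.1 ((I r).1.trans b)
      omega
    · intro h
      obtain rfl : r = m := by omega
      exact I r
  · have I := inter hadm had hd1 hd2 hc1 hc2 hcd.symm hA' hA h
    rw [if_pos h]
    constructor
    · rintro ⟨a, b⟩
      have h1 := md.lt_iff_lt.1 ((I m).1.trans a)
      have h2 := md.lt_iff_lt.1 (b.trans (I (m+1)).2)
      omega
    · intro h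
      obtain rfl : r = m + 1 := by omega
      exact ⟨(I m).2, (I (m+1)).1⟩

theorem xsj_occ (hadm : Admissible n ι) (s : ℤ) (c d r : ℕ) (hd1 : 1 ≤ d) (hd2 : d ≤ n) (hr : 1 ≤ r) :
    xsj ι n s c (occPos ι d r) = if c = d ∧ s = r then 1 else 0 := by
  unfold xsj
  split_ifs with h1 h2 h2
  · obtain ⟨rfl, rfl⟩ := h2
    simp [xc]
  · have := (occ_inj hadm hd1 hd2 h1.2.1 h1.2.2 hr (by omega : 1 ≤ s.toNat)).not.2
      (by rintro ⟨rfl, rfl⟩; exact h2 ⟨rfl, by omega⟩)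
    simp [xc, this]
  · obtain ⟨rfl, rfl⟩ := h2
    exfalso; apply h1; omega
  · rfl

theorem xsj_zero (hadm : Admissible n ι) (s : ℤ) (c : ℕ) : xsj ι n s c 0 = 0 := by
  unfold xsj
  split_ifs with h1
  · have := occ_pos hadm h1.2.1 h1.2.2 (by omega : 1 ≤ s.toNat)
    simp [xc]; omega
  · rfl

end occ

theorem Ctx.ne_up {n ι A γ} (h : Ctx n ι A γ) (c : ℕ) (h1 : 1 ≤ c) (h2 : c < n) :
    A c (c + 1) ≠ 0 := by
  have := h.hAup c h1 h2
  have hg := h.hγ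
  intro h0
  rw [h0] at this
  split_ifs at this <;> simp at this
  linarith

theorem Ctx.ne_dn {n ι A γ} (h : Ctx n ι A γ) (c : ℕ) (h1 : 1 ≤ c) (h2 : c < n) :
    A (c + 1) c ≠ 0 := by
  have := h.hAdn (c + 1) (by omega) (by omega)
  intro h0
  simp only [Nat.add_sub_cancel] at this
  rw [h0] at this
  split_ifs at this <;> simp at this

theorem beta_occ {n ι A γ} (h : Ctx n ι A γ) {c m : ℕ} (h1 : 1 ≤ c) (h2 : c ≤ n) (hm : 1 ≤ m) :
    beta A ι (occPos ι c m) =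
      xsj ι n m c + xsj ι n (m + 1) c
      + (A c (c - 1) : ℚ) • xsj ι n (m + pval ι (c - 1) c) (c - 1)
      + (A c (c + 1) : ℚ) • xsj ι n (m + pval ι (c + 1) c) (c + 1) := by
  have hadm := h.hadm
  have hp := occ_pos hadm h1 h2 hm
  have mc := occ_mono hadm h1 h2
  unfold beta
  rw [if_neg (by omega), kplus_occ hadm h1 h2 hm, occ_letter hadm h1 h2 hm]
  funext q
  simp only [Pi.add_apply, Finset.sum_apply, Pi.smul_apply, smul_eq_mul]
  have hsum : ∑ j ∈ Finset.Ioo (occPos ι c m) (occPos ι c (m + 1)), (A c (ι j) : ℚ) * xc j q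
      = if occPos ι c m < q ∧ q < occPos ι c (m + 1) then (A c (ι q) : ℚ) else 0 := by
    have : ∀ j, (A c (ι j) : ℚ) * xc j q = if q = j then (A c (ι j) : ℚ) else 0 := by
      intro j; simp [xc]
    simp only [this, Finset.sum_ite_eq, Finset.mem_Ioo]
  rw [hsum]
  have e1 : xc (occPos ι c m) = xsj ι n m c := by
    unfold xsj; rw [if_pos ⟨by omega, h1, h2⟩]; simp
  have e2 : xc (occPos ι c (m + 1)) = xsj ι n (m + 1) c := by
    unfold xsj; rw [if_pos ⟨by omega, h1, h2⟩]; rfl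
  rw [e1, e2]
  rcases Nat.eq_zero_or_pos q with rfl | hq
  · simp [xsj_zero hadm]
  obtain ⟨r, hr, hqr⟩ := occ_exists hadm q hq
  obtain ⟨hd1, hd2⟩ := hadm.1 q hq
  generalize ι q = d at *
  subst hqr
  simp only [xsj_occ hadm _ _ d r hd1 hd2 hr]
  by_cases hc : c = d
  · subst hc
    rw [if_neg (show ¬ (occPos ι c m < occPos ι c r ∧ occPos ι c r < occPos ι c (m + 1)) by
      rw [mc.lt_iff_lt, mc.lt_iff_lt]; omega)]
    have : ¬ (c - 1 = c) := by omega
    simp [this]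
  · by_cases hu : c + 1 = d
    · subst hu
      have hm2 := mem_between hadm h.had h1 h2 hd1 hd2 hc (h.ne_up c h1 (by omega))
        (h.ne_dn c h1 (by omega)) hm hr
      rw [if_congr hm2 rfl rfl]
      have : ¬ (c - 1 = c + 1) := by omega
      have h3 : (r = m + pval ι (c + 1) c) ↔ ((m : ℤ) + (pval ι (c + 1) c) = r) := by omega
      simp [this, h3]
    · by_cases hdn : d + 1 = c
      · subst hdn
        have hm2 := mem_between hadm h.had h1 h2 hd1 hd2 hc (h.ne_dn d hd1 (by omega))
          (h.ne_up d hd1 (by omega)) hm hr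
        rw [if_congr hm2 rfl rfl]
        have : ¬ (d + 1 + 1 = d) := by omega
        have h3 : (r = m + pval ι d (d + 1)) ↔ ((m : ℤ) + (pval ι d (d + 1)) = r) := by omega
        simp [this, h3]
      · rw [h.hA0 c d hc hu hdn]
        have : ¬ (c - 1 = d) := by omega
        simp [this, hc, hu]

end XiBC

namespace XiBC

/-- Normalised coordinates. -/
noncomputable def yv (ι : ℕ → ℕ) (n : ℕ) (M : ℤ) (c : ℕ) : ℕ → ℚ :=
  xsj ι n (M + (PABC ι n c : ℤ)) c

/-- Weight of an entry. -/
def cw (n : ℕ) (γ : ℚ) (e : ℕ) : ℚ := if e = n then γ else 1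

/-- The letter moved when the entry `e` is raised to `e + 1`. -/
def col (n e : ℕ) : ℕ := min e (2 * n - e)

/-- Positive part of the box of `e` at `t`. -/
noncomputable def Zv (ι : ℕ → ℕ) (n : ℕ) (γ : ℚ) (t : ℤ) (e : ℕ) : ℕ → ℚ :=
  cw n γ e • yv ι n (t + ((e - n : ℕ) : ℤ)) (col n e)

/-- Normalised box. -/
noncomputable def bx (ι : ℕ → ℕ) (n : ℕ) (γ : ℚ) (t : ℤ) (e : ℕ) : ℕ → ℚ :=
  Zv ι n γ t e - Zv ι n γ (t + 1) (e - 1)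

theorem PABC_succ {ι : ℕ → ℕ} {n c : ℕ} (h1 : 1 ≤ c) (h2 : c < n) :
    PABC ι n (c + 1) = PABC ι n c + pval ι (c + 1) c := by
  unfold PABC
  rw [if_pos (by omega), if_pos (by omega), Finset.sum_Icc_succ_top (by omega)]
  simp

theorem pval_add {n ι} (hadm : Admissible n ι) {c : ℕ} (h1 : 1 ≤ c) (h2 : c < n) :
    pval ι c (c + 1) + pval ι (c + 1) c = 1 := by
  have := first_ne hadm h1 (by omega) (show 1 ≤ c + 1 by omega) (by omega) (by omega : c ≠ c + 1)
  unfold pval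
  split_ifs <;> omega

theorem yv_zero (ι : ℕ → ℕ) (n : ℕ) (M : ℤ) : yv ι n M 0 = 0 := by
  unfold yv xsj; rw [if_neg (by omega)]

theorem yv_top (ι : ℕ → ℕ) (n : ℕ) (M : ℤ) : yv ι n M (n + 1) = 0 := by
  unfold yv xsj; rw [if_neg (by omega)]

theorem beta_y {n ι A γ} (h : Ctx n ι A γ) {c : ℕ} {M : ℤ} (h1 : 1 ≤ c) (h2 : c ≤ n)
    (hm : 1 ≤ M + (PABC ι n c : ℤ)) :
    beta A ι (occPos ι c (M + (PABC ι n c : ℤ)).toNat) =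
      yv ι n M c + yv ι n (M + 1) c + (A c (c - 1) : ℚ) • yv ι n (M + 1) (c - 1)
      + (A c (c + 1) : ℚ) • yv ι n M (c + 1) := by
  rw [beta_occ h h1 h2 (by omega)]
  have e0 : (((M + (PABC ι n c : ℤ)).toNat : ℕ) : ℤ) = M + (PABC ι n c : ℤ) := by omega
  rw [e0]
  have a1 : xsj ι n (M + (PABC ι n c : ℤ) + 1) c = yv ι n (M + 1) c := by
    unfold yv; congr 1; ring
  have a2 : xsj ι n (M + (PABC ι n c : ℤ) + (pval ι (c - 1) c : ℤ)) (c - 1)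
      = yv ι n (M + 1) (c - 1) := by
    obtain ⟨c, rfl⟩ : ∃ c', c = c' + 1 := ⟨c - 1, by omega⟩
    simp only [Nat.add_sub_cancel]
    rcases Nat.eq_zero_or_pos c with rfl | hc
    · rw [yv_zero]; unfold xsj; rw [if_neg (by omega)]
    · unfold yv; congr 1
      have b1 := PABC_succ (ι := ι) (n := n) hc (by omega)
      have b2 := pval_add h.hadm hc (by omega : c < n)
      omega
  have a3 : xsj ι n (M + (PABC ι n c : ℤ) + (pval ι (c + 1) c : ℤ)) (c + 1)
      = yv ι n M (c + 1) := by
    rcases Nat.lt_or_ge c n with hc | hc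
    · unfold yv; congr 1
      have b1 := PABC_succ (ι := ι) (n := n) h1 hc
      omega
    · obtain rfl : c = n := by omega
      rw [yv_top]; unfold xsj; rw [if_neg (by omega)]
  rw [a1, a2, a3]
  rfl

/-- The occurrence number of the position attached to `(t, e)`. -/
noncomputable def idx (ι : ℕ → ℕ) (n : ℕ) (t : ℤ) (e : ℕ) : ℤ :=
  t + ((e - n : ℕ) : ℤ) + (PABC ι n (col n e) : ℤ)

theorem beta_Z {n ι A γ} (h : Ctx n ι A γ) {e : ℕ} {t : ℤ} (h1 : 1 ≤ e) (h2 : e < 2 * n)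
    (hm : 1 ≤ idx ι n t e) :
    cw n γ e • beta A ι (occPos ι (col n e) (idx ι n t e).toNat) =
      Zv ι n γ t e + Zv ι n γ (t + 1) e - Zv ι n γ (t + 1) (e - 1) - Zv ι n γ t (e + 1) := by
  have hn := h.hn
  unfold idx at *
  rw [beta_y h (by unfold col; omega) (by unfold col; omega) hm]
  unfold Zv
  rcases lt_trichotomy e n with he | he | he
  · have c1 : col n e = e := by unfold col; omega
    have c2 : col n (e - 1) = e - 1 := by unfold col; omega
    have c3 : col n (e + 1) = e + 1 := by unfold col; omega
    have z1 : e - n = 0 := by omega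
    have z2 : e - 1 - n = 0 := by omega
    have z3 : e + 1 - n = 0 := by omega
    have w1 : cw n γ e = 1 := by unfold cw; rw [if_neg (by omega)]
    have w2 : cw n γ (e - 1) = 1 := by unfold cw; rw [if_neg (by omega)]
    have u := h.hAup e h1 he
    rw [c1, c2, c3, z1, z2, z3, w1, w2, u]
    have d : (A e (e - 1) : ℚ) • yv ι n (t + 1) (e - 1) = - yv ι n (t + 1) (e - 1) := by
      rcases Nat.lt_or_ge e 2 with h3 | h3
      · obtain rfl : e = 1 := by omega
        simp [yv_zero]
      · have := h.hAdn e h3 he.le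
        rw [if_neg he.ne, if_neg he.ne, one_mul] at this
        rw [this]; simp
    simp only [Nat.cast_zero, add_zero, one_smul, d, cw]
    module
  · subst he
    have c1 : col e e = e := by unfold col; omega
    have c2 : col e (e - 1) = e - 1 := by unfold col; omega
    have c3 : col e (e + 1) = e - 1 := by unfold col; omega
    have z1 : e - e = 0 := by omega
    have z2 : e - 1 - e = 0 := by omega
    have z3 : e + 1 - e = 1 := by omega
    have w1 : cw e γ e = γ := by unfold cw; rw [if_pos (by omega)]
    have w2 : cw e γ (e - 1) = 1 := by unfold cw; rw [if_neg (by omega)]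
    have w3 : cw e γ (e + 1) = 1 := by unfold cw; rw [if_neg (by omega)]
    have u := h.hAdn e (by omega) le_rfl
    rw [if_pos rfl, if_pos rfl] at u
    rw [c1, c2, c3, z1, z2, z3, w1, w2, w3, yv_top]
    simp only [Nat.cast_zero, add_zero, one_smul, smul_add, smul_smul, u, Nat.cast_one, smul_zero]
    module
  · obtain ⟨f, hf⟩ : ∃ f, f = 2 * n - e := ⟨_, rfl⟩
    have c1 : col n e = f := by unfold col; omega
    have c2 : col n (e - 1) = f + 1 := by unfold col; omega
    have c3 : col n (e + 1) = f - 1 := by unfold col; omega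
    have z1 : ((e - 1 - n : ℕ) : ℤ) = ((e - n : ℕ) : ℤ) - 1 := by omega
    have z3 : ((e + 1 - n : ℕ) : ℤ) = ((e - n : ℕ) : ℤ) + 1 := by omega
    have w1 : cw n γ e = 1 := by unfold cw; rw [if_neg (by omega)]
    have w2 : cw n γ (e - 1) = if f + 1 = n then γ else 1 := by
      unfold cw; congr 1; apply propext; omega
    have w3 : cw n γ (e + 1) = 1 := by unfold cw; rw [if_neg (by omega)]
    have u := h.hAup f (by omega) (by omega)
    have d : ∀ M, (A f (f - 1) : ℚ) • yv ι n M (f - 1) = - yv ι n M (f - 1) := by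
      intro M
      rcases Nat.lt_or_ge f 2 with h3 | h3
      · obtain rfl : f = 1 := by omega
        simp [yv_zero]
      · have := h.hAdn f h3 (by omega)
        rw [if_neg (by omega), if_neg (by omega), one_mul] at this
        rw [this]; simp
    rw [c1, c2, c3, z1, z3, w1, w2, w3, u, d]
    have q1 : t + 1 + (((e - n : ℕ) : ℤ) - 1) = t + ((e - n : ℕ) : ℤ) := by ring
    have q2 : t + 1 + ((e - n : ℕ) : ℤ) = t + ((e - n : ℕ) : ℤ) + 1 := by ring
    have q3 : t + (((e - n : ℕ) : ℤ) + 1) = t + ((e - n : ℕ) : ℤ) + 1 := by ring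
    rw [q1, q2, q3]
    module

theorem bx_succ {n ι A γ} (h : Ctx n ι A γ) {e : ℕ} {t : ℤ} (h1 : 1 ≤ e) (h2 : e < 2 * n)
    (hm : 1 ≤ idx ι n t e) :
    bx ι n γ t (e + 1) = bx ι n γ t e
      - cw n γ e • beta A ι (occPos ι (col n e) (idx ι n t e).toNat) := by
  rw [beta_Z h h1 h2 hm]
  unfold bx
  simp only [Nat.add_sub_cancel]
  abel

/-- Coefficient of `Zv` at a position. -/
theorem Zv_occ {n ι A γ} (h : Ctx n ι A γ) {t : ℤ} {e d r : ℕ} (he : e ≤ 2 * n)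
    (hd1 : 1 ≤ d) (hd2 : d ≤ n) (hr : 1 ≤ r) :
    Zv ι n γ t e (occPos ι d r) = cw n γ d *
      ((if e = d ∧ t = r - PABC ι n d then 1 else 0)
       + (if d < n then if e = 2 * n - d ∧ t = r - PABC ι n d - n + d then 1 else 0 else 0)) := by
  have hn := h.hn
  unfold Zv yv
  rw [Pi.smul_apply, xsj_occ h.hadm _ _ d r hd1 hd2 hr, smul_eq_mul]
  by_cases hc : col n e = d
  · have hw : cw n γ e = cw n γ d := by
      unfold cw; congr 1; apply propext; unfold col at hc; omega
    rw [hw, hc]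
    congr 1
    unfold col at hc
    rcases Nat.lt_or_ge n e with h3 | h3
    · rw [if_neg (by omega : ¬ (e = d ∧ t = r - PABC ι n d)), if_pos (by omega : d < n), zero_add]
      congr 1; apply propext; omega
    · rw [if_congr (show (d = d ∧ t + ((e - n : ℕ) : ℤ) + (PABC ι n d : ℤ) = r) ↔
        (e = d ∧ t = r - PABC ι n d) by omega) rfl rfl]
      split_ifs <;> first | omega | simp
  · rw [if_neg (fun h => hc h.1)]
    unfold col at hc
    rw [if_neg (by omega)]
    rw [if_neg (by omega : ¬ (e = 2 * n - d ∧ t = r - PABC ι n d - n + d))]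
    simp

theorem boxB_eq {ι : ℕ → ℕ} {n : ℕ} (hn : 2 ≤ n) (t : ℤ) {e : ℕ} (h1 : 1 ≤ e) (h2 : e ≤ 2 * n) :
    boxB ι n t e = bx ι n 1 t e := by
  have hw : ∀ e, cw n 1 e = 1 := by intro e; simp [cw]
  unfold boxB bx Zv yv
  simp only [hw, one_smul]
  split_ifs with h
  · have c1 : col n e = e := by unfold col; omega
    have c2 : col n (e - 1) = e - 1 := by unfold col; omega
    rw [c1, c2]
    congr 2 <;> omega
  · have c1 : col n e = 2 * n - e := by unfold col; omega
    have c2 : col n (e - 1) = 2 * n + 1 - e := by unfold col; omega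
    rw [c1, c2]
    congr 2 <;> omega

theorem boxC_eq {ι : ℕ → ℕ} {n : ℕ} (hn : 2 ≤ n) (t : ℤ) {e : ℕ} (h1 : 1 ≤ e) (h2 : e ≤ 2 * n) :
    boxC ι n t e = bx ι n 2 t e := by
  unfold boxC bx Zv yv
  rw [if_neg (by omega)]
  split_ifs with h h h
  · have c1 : col n e = e := by unfold col; omega
    have c2 : col n (e - 1) = e - 1 := by unfold col; omega
    have w1 : cw n 2 e = 1 := by unfold cw; rw [if_neg (by omega)]
    have w2 : cw n 2 (e - 1) = 1 := by unfold cw; rw [if_neg (by omega)]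
    rw [c1, c2, w1, w2, one_smul, one_smul]
    congr 2 <;> omega
  · subst h
    have c1 : col e e = e := by unfold col; omega
    have c2 : col e (e - 1) = e - 1 := by unfold col; omega
    have w1 : cw e 2 e = 2 := by unfold cw; rw [if_pos (by omega)]
    have w2 : cw e 2 (e - 1) = 1 := by unfold cw; rw [if_neg (by omega)]
    rw [c1, c2, w1, w2, one_smul]
    congr 2
    · congr 1; omega
    · omega
  · subst h
    have c1 : col n (n + 1) = n - 1 := by unfold col; omega
    have c2 : col n (n + 1 - 1) = n := by unfold col; omega
    have w1 : cw n 2 (n + 1) = 1 := by unfold cw; rw [if_neg (by omega)]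
    have w2 : cw n 2 (n + 1 - 1) = 2 := by unfold cw; rw [if_pos (by omega)]
    rw [c1, c2, w1, w2, one_smul]
    congr 2
    · omega
    · congr 1; omega
  · have c1 : col n e = 2 * n - e := by unfold col; omega
    have c2 : col n (e - 1) = 2 * n + 1 - e := by unfold col; omega
    have w1 : cw n 2 e = 1 := by unfold cw; rw [if_neg (by omega)]
    have w2 : cw n 2 (e - 1) = 1 := by unfold cw; rw [if_neg (by omega)]
    rw [c1, c2, w1, w2, one_smul, one_smul]
    congr 2 <;> omega

end XiBC

namespace XiBC

/-- Strictly increasing columns with entries in `[1, 2n]`. -/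
def Good (n k : ℕ) (j : ℕ → ℕ) : Prop :=
  (∀ i, 1 ≤ i → i ≤ k → 1 ≤ j i ∧ j i ≤ 2 * n) ∧ (∀ i, 1 ≤ i → i < k → j i < j (i + 1))

theorem Good.lt {n k j} (h : Good n k j) {a b : ℕ} (ha : 1 ≤ a) (hab : a < b) (hb : b ≤ k) :
    j a < j b := by
  induction b, hab using Nat.le_induction with
  | base => exact h.2 a ha (by omega)
  | succ b hab' ih => exact (ih (by omega)).trans (h.2 b (by omega) (by omega))

theorem Good.ge {n k j} (h : Good n k j) (a : ℕ) (ha : 1 ≤ a) (hb : a ≤ k) : a ≤ j a := by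
  induction a, ha using Nat.le_induction with
  | base => exact (h.1 1 le_rfl hb).1
  | succ a ha ih =>
    have := h.2 a ha (by omega)
    have := ih (by omega)
    omega

/-- Indicator of the entry `e` in row `i`. -/
def ind (k : ℕ) (j : ℕ → ℕ) (e : ℕ) (i : ℤ) : ℤ :=
  if 1 ≤ i ∧ i ≤ k ∧ j i.toNat = e then 1 else 0

/-- Net contribution of `e → e + 1` at row `i`. -/
def ctr (k : ℕ) (j : ℕ → ℕ) (e : ℕ) (i : ℤ) : ℤ := ind k j e i - ind k j (e + 1) (i + 1)

theorem sum_ind (k : ℕ) (j : ℕ → ℕ) (e : ℕ) (a τ : ℤ) :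
    ∑ i ∈ Finset.Icc 1 k, (if j i = e ∧ a - i = τ then (1 : ℚ) else 0) = ind k j e (a - τ) := by
  have : ∀ i ∈ Finset.Icc 1 k, (if j i = e ∧ a - i = τ then (1 : ℚ) else 0)
      = if i = (a - τ).toNat then (ind k j e (a - τ) : ℚ) else 0 := by
    intro i hi
    rw [Finset.mem_Icc] at hi
    unfold ind
    by_cases h : (i : ℤ) = a - τ
    · rw [if_pos (by omega : i = (a - τ).toNat), ← h]
      have e1 : ((i : ℤ)).toNat = i := by omega
      rw [e1]
      have : (j i = e ∧ a - i = τ) ↔ ((1 : ℤ) ≤ i ∧ (i : ℤ) ≤ k ∧ j i = e) := by omega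
      rw [if_congr this rfl rfl]
      push_cast; rfl
    · rw [if_neg (by omega : ¬ i = (a - τ).toNat), if_neg (by omega)]
  rw [Finset.sum_congr rfl this, Finset.sum_ite_eq']
  split_ifs with h
  · rfl
  · rw [Finset.mem_Icc] at h
    unfold ind
    rw [if_neg (by omega)]; simp

theorem tab_coef {n ι A γ} (h : Ctx n ι A γ) {k : ℕ} {j : ℕ → ℕ} {s : ℤ} (hj : Good n k j)
    {d r : ℕ} (hd1 : 1 ≤ d) (hd2 : d ≤ n) (hr : 1 ≤ r) :
    tab (bx ι n γ) s k j (occPos ι d r) = cw n γ d *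
      ((ctr k j d (s + k - (r - PABC ι n d)) : ℤ)
        + (if d < n then ((ctr k j (2 * n - d) (s + k - (r - PABC ι n d - n + d)) : ℤ) : ℚ)
            else 0)) := by
  have hn := h.hn
  unfold tab ctr
  rw [Finset.sum_apply]
  have key : ∀ i ∈ Finset.Icc 1 k, bx ι n γ (s + k - i) (j i) (occPos ι d r) = cw n γ d *
      (((if j i = d ∧ s + k - i = r - PABC ι n d then (1 : ℚ) else 0)
       - (if j i = d + 1 ∧ (s + k + 1) - i = r - PABC ι n d then 1 else 0))
       + (if d < n then
          (if j i = 2 * n - d ∧ s + k - i = r - PABC ι n d - n + d then (1 : ℚ) else 0)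
          - (if j i = 2 * n - d + 1 ∧ (s + k + 1) - i = r - PABC ι n d - n + d then 1 else 0)
          else 0)) := by
    intro i hi
    rw [Finset.mem_Icc] at hi
    obtain ⟨a, b⟩ := hj.1 i hi.1 hi.2
    unfold bx
    rw [Pi.sub_apply, Zv_occ h b hd1 hd2 hr, Zv_occ h (by omega) hd1 hd2 hr]
    have e1 : (j i - 1 = d ∧ s + k - i + 1 = r - PABC ι n d) ↔
      (j i = d + 1 ∧ (s + k + 1) - i = r - PABC ι n d) := by omega
    have e2 : (j i - 1 = 2 * n - d ∧ s + k - i + 1 = r - PABC ι n d - n + d) ↔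
      (j i = 2 * n - d + 1 ∧ (s + k + 1) - i = r - PABC ι n d - n + d) := by omega
    rw [if_congr e1 rfl rfl, if_congr e2 rfl rfl]
    by_cases hdn : d < n
    · simp only [if_pos hdn]; ring
    · simp only [if_neg hdn]; ring
  rw [Finset.sum_congr rfl key, ← Finset.mul_sum, Finset.sum_add_distrib, Finset.sum_sub_distrib,
    sum_ind, sum_ind]
  congr 1
  have f1 : s + (k : ℤ) + 1 - (r - PABC ι n d) = s + k - (r - PABC ι n d) + 1 := by ring
  rw [f1]
  by_cases hdn : d < n
  · simp only [if_pos hdn]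
    rw [Finset.sum_sub_distrib, sum_ind, sum_ind]
    have f2 : s + (k : ℤ) + 1 - (r - PABC ι n d - n + d)
      = s + k - (r - PABC ι n d - n + d) + 1 := by ring
    rw [f2]; push_cast; rfl
  · simp only [if_neg hdn]; simp

theorem ctr_cases {n k j} (hj : Good n k j) (e : ℕ) (p : ℤ) :
    ctr k j e p = 0 ∨
    (ctr k j e p = 1 ∧ ∃ i : ℕ, 1 ≤ i ∧ i ≤ k ∧ (i : ℤ) = p ∧ j i = e ∧
      (i < k → j (i + 1) ≠ e + 1)) ∨
    (ctr k j e p = -1 ∧ ∃ i : ℕ, 1 ≤ i ∧ i ≤ k ∧ (i : ℤ) = p + 1 ∧ j i = e + 1 ∧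
      (1 < i → j (i - 1) ≠ e)) := by
  have _ := hj
  unfold ctr ind
  by_cases h1 : 1 ≤ p ∧ p ≤ k ∧ j p.toNat = e
  · by_cases h2 : 1 ≤ p + 1 ∧ p + 1 ≤ k ∧ j (p + 1).toNat = e + 1
    · left; rw [if_pos h1, if_pos h2]; norm_num
    · right; left
      rw [if_pos h1, if_neg h2]
      refine ⟨by norm_num, p.toNat, by omega, by omega, by omega, h1.2.2, ?_⟩
      intro hlt heq
      apply h2
      have : (p + 1).toNat = p.toNat + 1 := by omega
      rw [this]
      exact ⟨by omega, by omega, heq⟩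
  · by_cases h2 : 1 ≤ p + 1 ∧ p + 1 ≤ k ∧ j (p + 1).toNat = e + 1
    · right; right
      rw [if_neg h1, if_pos h2]
      refine ⟨by norm_num, (p + 1).toNat, by omega, by omega, by omega, h2.2.2, ?_⟩
      intro hlt heq
      apply h1
      have : (p + 1).toNat - 1 = p.toNat := by omega
      rw [this] at heq
      exact ⟨by omega, by omega, heq⟩
    · left; rw [if_neg h1, if_neg h2]; norm_num

theorem ctr_update {k : ℕ} {j : ℕ → ℕ} {i v e : ℕ} (h1 : j i ≠ e) (h2 : j i ≠ e + 1)
    (h3 : v ≠ e) (h4 : v ≠ e + 1) (p : ℤ) :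
    ctr k (Function.update j i v) e p = ctr k j e p := by
  unfold ctr ind
  have key : ∀ (q : ℕ) (f : ℕ), j i ≠ f → v ≠ f → (Function.update j i v q = f ↔ j q = f) := by
    intro q f a b
    by_cases hq : q = i
    · subst hq; simp [a, b]
    · simp [Function.update_of_ne hq]
  simp only [key _ e h1 h3, key _ (e + 1) h2 h4]

theorem tab_update (b : ℤ → ℕ → ℕ → ℚ) (s : ℤ) {k : ℕ} (j : ℕ → ℕ) {i : ℕ} (v : ℕ)
    (h1 : 1 ≤ i) (h2 : i ≤ k) :
    tab b s k (Function.update j i v) = tab b s k j - b (s + k - i) (j i) + b (s + k - i) v := by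
  unfold tab
  have hi : i ∈ Finset.Icc 1 k := Finset.mem_Icc.2 ⟨h1, h2⟩
  rw [← Finset.add_sum_erase _ _ hi, ← Finset.add_sum_erase _ _ hi]
  have : ∑ x ∈ (Finset.Icc 1 k).erase i, b (s + k - x) (Function.update j i v x)
      = ∑ x ∈ (Finset.Icc 1 k).erase i, b (s + k - x) (j x) := by
    apply Finset.sum_congr rfl
    intro x hx
    rw [Function.update_of_ne (Finset.ne_of_mem_erase hx)]
  rw [this, Function.update_self]
  abel

theorem Good.up {n k j} (hj : Good n k j) {i e : ℕ} (h1 : 1 ≤ i) (h2 : i ≤ k) (he : j i = e)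
    (h2n : e < 2 * n) (hnext : i < k → j (i + 1) ≠ e + 1) :
    Good n k (Function.update j i (e + 1)) := by
  constructor
  · intro a ha hb
    by_cases hai : a = i
    · subst hai; rw [Function.update_self]; omega
    · rw [Function.update_of_ne hai]; exact hj.1 a ha hb
  · intro a ha hb
    have h3 := hj.2 a ha hb
    by_cases hai : a = i
    · subst hai
      rw [Function.update_self, Function.update_of_ne (by omega)]
      have := hnext hb
      omega
    · rw [Function.update_of_ne hai]
      by_cases hai2 : a + 1 = i
      · subst hai2; rw [Function.update_self]; omega
      · rw [Function.update_of_ne hai2]; exact h3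

theorem Good.down {n k j} (hj : Good n k j) {i e : ℕ} (h1 : 1 ≤ i) (h2 : i ≤ k)
    (he : j i = e + 1) (h0 : 1 ≤ e) (hprev : 1 < i → j (i - 1) ≠ e) :
    Good n k (Function.update j i e) := by
  constructor
  · intro a ha hb
    have h3 := hj.1 a ha hb
    by_cases hai : a = i
    · subst hai; rw [Function.update_self]; omega
    · rw [Function.update_of_ne hai]; exact h3
  · intro a ha hb
    have h3 := hj.2 a ha hb
    by_cases hai : a = i
    · subst hai
      rw [Function.update_self, Function.update_of_ne (by omega)]
      omega
    · rw [Function.update_of_ne hai]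
      by_cases hai2 : a + 1 = i
      · subst hai2
        rw [Function.update_self]
        have := hprev (by omega)
        simp only [Nat.add_sub_cancel] at this
        omega
      · rw [Function.update_of_ne hai2]; exact h3

theorem halfUp {n ι A γ} (h : Ctx n ι A γ) {k : ℕ} {j : ℕ → ℕ} {s : ℤ} (hj : Good n k j)
    {d r e : ℕ} {p : ℤ} (he1 : 1 ≤ e) (he2 : e < 2 * n) (hr : 1 ≤ r) (hcol : col n e = d)
    (hidx : idx ι n (s + k - p) e = r) (hc : 0 ≤ ctr k j e p) :
    ∃ j', Good n k j' ∧ tab (bx ι n γ) s k j' =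
        tab (bx ι n γ) s k j - ((ctr k j e p : ℚ) * cw n γ d) • beta A ι (occPos ι d r) ∧
      ∀ e2 p2, e2 ≠ e → e2 ≠ e + 1 → e2 + 1 ≠ e → ctr k j' e2 p2 = ctr k j e2 p2 := by
  have hw : cw n γ e = cw n γ d := by
    unfold cw; congr 1; apply propext; unfold col at hcol; omega
  rcases ctr_cases hj e p with h0 | ⟨h1, i, hi1, hi2, hip, hji, hnext⟩ | ⟨h1, _⟩
  · refine ⟨j, hj, ?_, fun _ _ _ _ _ => rfl⟩
    rw [h0]; simp
  · refine ⟨Function.update j i (e + 1), hj.up hi1 hi2 hji he2 hnext, ?_, ?_⟩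
    · rw [tab_update _ _ _ _ hi1 hi2, h1, hip, hji, bx_succ h he1 he2 (by omega), hidx, hcol, hw]
      simp only [Int.toNat_natCast, Int.cast_one, one_mul]
      abel
    · intro e2 p2 a b c
      apply ctr_update <;> omega
  · omega

theorem halfDown {n ι A γ} (h : Ctx n ι A γ) {k : ℕ} {j : ℕ → ℕ} {s : ℤ} (hj : Good n k j)
    {d r e : ℕ} {p : ℤ} (he1 : 1 ≤ e) (he2 : e < 2 * n) (hr : 1 ≤ r) (hcol : col n e = d)
    (hidx : idx ι n (s + k - p) e = r + 1) (hc : ctr k j e p ≤ 0) :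
    ∃ j', Good n k j' ∧ tab (bx ι n γ) s k j' =
        tab (bx ι n γ) s k j - ((ctr k j e p : ℚ) * cw n γ d) • beta A ι (occPos ι d r) ∧
      ∀ e2 p2, e2 ≠ e → e2 ≠ e + 1 → e2 + 1 ≠ e → ctr k j' e2 p2 = ctr k j e2 p2 := by
  have hw : cw n γ e = cw n γ d := by
    unfold cw; congr 1; apply propext; unfold col at hcol; omega
  rcases ctr_cases hj e p with h0 | ⟨h1, _⟩ | ⟨h1, i, hi1, hi2, hip, hji, hprev⟩
  · refine ⟨j, hj, ?_, fun _ _ _ _ _ => rfl⟩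
    rw [h0]; simp
  · omega
  · refine ⟨Function.update j i e, hj.down hi1 hi2 hji he1 hprev, ?_, ?_⟩
    · have hidx2 : idx ι n (s + k - i) e = r := by unfold idx at *; omega
      rw [tab_update _ _ _ _ hi1 hi2, h1, hji, bx_succ h he1 he2 (by omega), hidx2, hcol, hw]
      simp only [Int.toNat_natCast, Int.cast_neg, Int.cast_one, neg_mul, one_mul, neg_smul]
      abel
    · intro e2 p2 a b c
      apply ctr_update <;> omega

theorem cw_pos {n ι A γ} (h : Ctx n ι A γ) (e : ℕ) : 0 < cw n γ e := by
  have := h.hγ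
  unfold cw; split_ifs <;> linarith

theorem closure_step {n ι A γ} (h : Ctx n ι A γ) {k : ℕ} {j : ℕ → ℕ} {s : ℤ} (hj : Good n k j)
    {q : ℕ} (hq : 1 ≤ q) :
    ∃ j', Good n k j' ∧ Sop A ι q (tab (bx ι n γ) s k j) = tab (bx ι n γ) s k j' := by
  have hn := h.hn
  obtain ⟨r, hr, hqr⟩ := occ_exists h.hadm q hq
  obtain ⟨hd1, hd2⟩ := h.hadm.1 q hq
  generalize ι q = d at *
  subst hqr
  have hcoef := tab_coef h hj hd1 hd2 hr (s := s)
  obtain ⟨r', rfl⟩ : ∃ r', r = r' + 1 := ⟨r - 1, by omega⟩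
  have hw := cw_pos h d
  unfold Sop
  rw [kminus_occ h.hadm hd1 hd2]
  set φ := tab (bx ι n γ) s k j with hφ
  set p1 : ℤ := s + k - (((r' + 1 : ℕ) : ℤ) - PABC ι n d) with hp1
  set p2 : ℤ := s + k - (((r' + 1 : ℕ) : ℤ) - PABC ι n d - n + d) with hp2
  have i1 : idx ι n (s + k - p1) d = ((r' + 1 : ℕ) : ℤ) := by
    have : col n d = d := by unfold col; omega
    unfold idx; rw [this]; omega
  have i2 : idx ι n (s + k - p2) (2 * n - d) = ((r' + 1 : ℕ) : ℤ) := by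
    have : col n (2 * n - d) = d := by unfold col; omega
    unfold idx; rw [this]; omega
  have hup : 0 ≤ ctr k j d p1 → (d < n → 0 ≤ ctr k j (2 * n - d) p2) →
      ∃ j', Good n k j' ∧ φ - φ (occPos ι d (r' + 1)) • beta A ι (occPos ι d (r' + 1)) =
        tab (bx ι n γ) s k j' := by
    intro a b
    obtain ⟨j1, g1, t1, c1⟩ := halfUp h hj hd1 (by omega) hr (show col n d = d by unfold col; omega) i1 a
    by_cases hdn : d < n
    · have hc := c1 (2 * n - d) p2 (by omega) (by omega) (by omega)
      obtain ⟨j2, g2, t2, _⟩ := halfUp h g1 (by omega) (by omega) hr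
        (show col n (2 * n - d) = d by unfold col; omega) i2 (by rw [hc]; exact b hdn)
      refine ⟨j2, g2, ?_⟩
      rw [t2, t1, hcoef, hc, if_pos hdn]
      module
    · refine ⟨j1, g1, ?_⟩
      rw [t1, hcoef, if_neg hdn]
      module
  have hdown : ctr k j d p1 ≤ 0 → (d < n → ctr k j (2 * n - d) p2 ≤ 0) →
      ∃ j', Good n k j' ∧ φ - φ (occPos ι d (r' + 1)) • beta A ι (occPos ι d r') =
        tab (bx ι n γ) s k j' := by
    intro a b
    rcases Nat.eq_zero_or_pos r' with h0 | hr'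
    · refine ⟨j, hj, ?_⟩
      subst h0
      have : beta A ι (occPos ι d 0) = 0 := by simp [beta, occPos]
      rw [this]; simp [hφ]
    obtain ⟨j1, g1, t1, c1⟩ := halfDown h hj hd1 (by omega) hr' (show col n d = d by unfold col; omega)
      (by rw [i1]; push_cast; ring) a
    by_cases hdn : d < n
    · have hc := c1 (2 * n - d) p2 (by omega) (by omega) (by omega)
      obtain ⟨j2, g2, t2, _⟩ := halfDown h g1 (by omega) (by omega) hr'
        (show col n (2 * n - d) = d by unfold col; omega) (by rw [i2]; push_cast; ring)
        (by rw [hc]; exact b hdn)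
      refine ⟨j2, g2, ?_⟩
      rw [t2, t1, hcoef, hc, if_pos hdn]
      module
    · refine ⟨j1, g1, ?_⟩
      rw [t1, hcoef, if_neg hdn]
      module
  have hz : φ (occPos ι d (r' + 1)) = 0 →
      ∃ j', Good n k j' ∧ φ - φ (occPos ι d (r' + 1)) • beta A ι (occPos ι d r') =
        tab (bx ι n γ) s k j' := by
    intro a
    exact ⟨j, hj, by rw [a]; simp [hφ]⟩
  have b1 : -1 ≤ ctr k j d p1 ∧ ctr k j d p1 ≤ 1 := by
    rcases ctr_cases hj d p1 with a | a | a <;> omega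
  have b2 : -1 ≤ ctr k j (2 * n - d) p2 ∧ ctr k j (2 * n - d) p2 ≤ 1 := by
    rcases ctr_cases hj (2 * n - d) p2 with a | a | a <;> omega
  generalize ctr k j d p1 = x at *
  generalize ctr k j (2 * n - d) p2 = y at *
  set y' : ℤ := if d < n then y else 0 with hy'
  have hcoef' : φ (occPos ι d (r' + 1)) = cw n γ d * ((x + y' : ℤ) : ℚ) := by
    rw [hcoef, hy']; split_ifs <;> push_cast <;> rfl
  have b3 : -1 ≤ y' ∧ y' ≤ 1 := by rw [hy']; split_ifs <;> omega
  have e3 : d < n → y = y' := by intro a; rw [hy', if_pos a]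
  split_ifs with hpos
  · have : 0 < x + y' := by
      rw [hcoef'] at hpos
      have := (mul_pos_iff_of_pos_left hw).1 hpos
      exact_mod_cast this
    exact hup (by omega) (fun a => by rw [e3 a]; omega)
  · by_cases h0 : x + y' = 0
    · exact hz (by rw [hcoef', h0]; simp)
    · have : ¬ 0 < x + y' := by
        intro hh
        apply hpos
        rw [hcoef']
        apply mul_pos hw
        exact_mod_cast hh
      exact hdown (by omega) (fun a => by rw [e3 a]; omega)

end XiBC

namespace XiBC

/-- Weight used for the induction. -/
def wt (n k : ℕ) (j : ℕ → ℕ) : ℕ := ∑ i ∈ Finset.Icc 1 k, j i * (4 * n - j i)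

theorem wt_update (n : ℕ) {k : ℕ} (j : ℕ → ℕ) {i : ℕ} (v : ℕ) (h1 : 1 ≤ i) (h2 : i ≤ k) :
    wt n k (Function.update j i v) + j i * (4 * n - j i) = wt n k j + v * (4 * n - v) := by
  unfold wt
  have hi : i ∈ Finset.Icc 1 k := Finset.mem_Icc.2 ⟨h1, h2⟩
  rw [← Finset.add_sum_erase _ _ hi, ← Finset.add_sum_erase _ _ hi]
  have : ∑ x ∈ (Finset.Icc 1 k).erase i,
        (Function.update j i v x) * (4 * n - Function.update j i v x)
      = ∑ x ∈ (Finset.Icc 1 k).erase i, j x * (4 * n - j x) := by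
    apply Finset.sum_congr rfl
    intro x hx
    rw [Function.update_of_ne (Finset.ne_of_mem_erase hx)]
  rw [this, Function.update_self]
  omega

theorem wt_down {n k : ℕ} {j : ℕ → ℕ} {i e : ℕ} (h1 : 1 ≤ i) (h2 : i ≤ k) (he : j i = e + 1)
    (h2n : e < 2 * n) : wt n k (Function.update j i e) < wt n k j := by
  have := wt_update n j e h1 h2
  rw [he] at this
  obtain ⟨a, ha⟩ : ∃ a, 4 * n = e + 1 + a := ⟨4 * n - (e + 1), by omega⟩
  have e1 : 4 * n - (e + 1) = a := by omega
  have e2 : 4 * n - e = a + 1 := by omega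
  rw [e1, e2] at this
  have : e < a := by omega
  nlinarith

theorem PABC_lip {ι : ℕ → ℕ} {n c k : ℕ} (h0 : 1 ≤ c) (h1 : c ≤ k) (h2 : k ≤ n) :
    PABC ι n c ≤ PABC ι n k ∧ PABC ι n k ≤ PABC ι n c + (k - c) := by
  induction k, h1 using Nat.le_induction with
  | base => omega
  | succ k hk ih =>
    have := ih (by omega)
    have h3 := PABC_succ (ι := ι) (n := n) (c := k) (by omega) (by omega)
    have h4 : pval ι (k + 1) k ≤ 1 := by unfold pval; split_ifs <;> omega
    omega

theorem idx_pos {ι : ℕ → ℕ} {n k i e : ℕ} {s : ℤ} (hk : k ≤ n) (hi : 1 ≤ i) (hik : i ≤ k)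
    (he : i ≤ e) (he2 : e < 2 * n) (hs : 1 - (PABC ι n k : ℤ) ≤ s) :
    1 ≤ idx ι n (s + k - i) e := by
  unfold idx
  rcases Nat.lt_or_ge n e with h | h
  · have c1 : col n e = 2 * n - e := by unfold col; omega
    rw [c1]
    rcases Nat.lt_or_ge (2 * n - e) k with h3 | h3
    · have := PABC_lip (ι := ι) (by omega) h3.le hk
      omega
    · have := PABC_lip (ι := ι) (n := n) (by omega) h3 (by omega)
      omega
  · have c1 : col n e = e := by unfold col; omega
    rw [c1]
    rcases Nat.lt_or_ge e k with h3 | h3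
    · have := PABC_lip (ι := ι) (by omega) h3.le hk
      omega
    · have := PABC_lip (ι := ι) (n := n) (by omega) h3 (by omega)
      omega

theorem good_move {n ι A γ} (h : Ctx n ι A γ) {g : Set (ℕ → ℚ)} {k : ℕ} {j : ℕ → ℕ} {s : ℤ}
    (hkn : k ≤ n) (hs : 1 - (PABC ι n k : ℤ) ≤ s) (hj : Good n k j)
    (IH : ∀ j', Good n k j' → wt n k j' < wt n k j →
      XiMemFrom A ι g (tab (bx ι n γ) s k j'))
    {i e : ℕ} (h1 : 1 ≤ i) (h2 : i ≤ k) (he : j i = e + 1) (h0 : 1 ≤ e)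
    (hprev : 1 < i → j (i - 1) ≠ e)
    (hmir : e = n ∨ ctr k j (2 * n - e) (i + n - e) = 0) :
    XiMemFrom A ι g (tab (bx ι n γ) s k j) := by
  have hn := h.hn
  have he2 : e < 2 * n := by have := hj.1 i h1 h2; omega
  have hj' := hj.down h1 h2 he h0 hprev
  have hmem := IH _ hj' (wt_down h1 h2 he he2)
  have hie := hj'.ge i h1 h2
  rw [Function.update_self] at hie
  have hidx : 1 ≤ idx ι n (s + k - i) e := idx_pos hkn h1 h2 hie he2 hs
  have hd1 : 1 ≤ col n e := by unfold col; omega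
  have hd2 : col n e ≤ n := by unfold col; omega
  have hr : 1 ≤ (idx ι n (s + k - i) e).toNat := by omega
  have hq := occ_pos h.hadm hd1 hd2 hr
  have hstep := XiMemFrom.step _ hq _ hmem
  have hw := cw_pos h e
  have hctr1 : ctr k (Function.update j i e) e i = 1 := by
    unfold ctr ind
    have t1 : ((i : ℤ)).toNat = i := by omega
    have t2 : ((i : ℤ) + 1).toNat = i + 1 := by omega
    rw [t1, t2, Function.update_self, Function.update_of_ne (by omega), if_pos (by omega), if_neg]
    · rfl
    · rintro ⟨_, a, b⟩
      have := hj.2 i h1 (by omega)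
      omega
  have hctr2 : e = n ∨ ctr k (Function.update j i e) (2 * n - e) (i + n - e) = 0 := by
    rcases hmir with hm | hm
    · exact Or.inl hm
    · by_cases hen : e = n
      · exact Or.inl hen
      · right
        rw [ctr_update, hm] <;> omega
  have hcoef : tab (bx ι n γ) s k (Function.update j i e)
      (occPos ι (col n e) (idx ι n (s + k - i) e).toNat) = cw n γ e := by
    rw [tab_coef h hj' hd1 hd2 hr]
    have hw : cw n γ e = cw n γ (col n e) := by
      unfold cw; congr 1; apply propext; unfold col; omega
    rw [hw]
    have hcast : (((idx ι n (s + k - i) e).toNat : ℕ) : ℤ) = idx ι n (s + k - i) e := by omega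
    rw [hcast]
    generalize Function.update j i e = j' at *
    rcases lt_trichotomy e n with hen | hen | hen
    · have c1 : col n e = e := by unfold col; omega
      have p1 : s + k - (idx ι n (s + k - i) e - PABC ι n (col n e)) = i := by
        unfold idx; omega
      have p2 : s + k - (idx ι n (s + k - i) e - PABC ι n (col n e) - n + (col n e : ℕ))
          = i + n - e := by
        unfold idx; omega
      rw [p1, p2, c1, hctr1, hctr2.resolve_left (by omega)]
      simp
    · have c1 : col n e = e := by unfold col; omega
      have p1 : s + k - (idx ι n (s + k - i) e - PABC ι n (col n e)) = i := by
        unfold idx; omega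
      rw [p1, c1, hctr1, if_neg (by omega)]
      simp
    · have c1 : col n e = 2 * n - e := by unfold col; omega
      have c3 : 2 * n - (2 * n - e) = e := by omega
      have p1 : s + k - (idx ι n (s + k - i) e - PABC ι n (col n e)) = i + n - e := by
        unfold idx; omega
      have p2 : s + k - (idx ι n (s + k - i) e - PABC ι n (col n e) - n + (col n e : ℕ))
          = i := by
        unfold idx; omega
      rw [p1, p2, c1, c3, hctr1, hctr2.resolve_left (by omega)]
      simp [show 2 * n - e < n by omega]
  have hres : Sop A ι (occPos ι (col n e) (idx ι n (s + k - i) e).toNat)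
      (tab (bx ι n γ) s k (Function.update j i e)) = tab (bx ι n γ) s k j := by
    unfold Sop
    rw [hcoef, if_pos hw, tab_update _ _ _ _ h1 h2, he, bx_succ h h0 he2 hidx]
    abel
  rw [hres] at hstep
  exact hstep

theorem Zv_mirror {ι : ℕ → ℕ} {n : ℕ} (γ : ℚ) (t : ℤ) {e : ℕ} (he : e ≤ n) :
    Zv ι n γ t (2 * n - e) = Zv ι n γ (t + n - e) e := by
  have hw : cw n γ (2 * n - e) = cw n γ e := by
    unfold cw; congr 1; apply propext; omega
  have hc : col n (2 * n - e) = col n e := by unfold col; omega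
  unfold Zv
  rw [hw, hc]
  congr 2; omega

theorem bx_swap {ι : ℕ → ℕ} {n : ℕ} (γ : ℚ) (t u : ℤ) {e : ℕ} (h0 : 1 ≤ e) (he : e < n)
    (ht : t = u + n - e) :
    bx ι n γ t (e + 1) + bx ι n γ u (2 * n - e) = bx ι n γ t e + bx ι n γ u (2 * n - e + 1) := by
  have a1 := Zv_mirror (ι := ι) γ u he.le
  have a2 := Zv_mirror (ι := ι) γ (u + 1) he.le
  have a3 := Zv_mirror (ι := ι) γ (u + 1) (show e + 1 ≤ n by omega)
  have a4 := Zv_mirror (ι := ι) γ u (show e - 1 ≤ n by omega)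
  have e3 : 2 * n - (e + 1) = 2 * n - e - 1 := by omega
  have e4 : 2 * n - (e - 1) = 2 * n - e + 1 := by omega
  have f1 : u + n - e = t := by omega
  have f2 : u + 1 + n - e = t + 1 := by omega
  have f3 : u + 1 + n - ((e + 1 : ℕ) : ℤ) = t := by omega
  have f4 : u + n - ((e - 1 : ℕ) : ℤ) = t + 1 := by omega
  rw [e3, f3] at a3
  rw [e4, f4] at a4
  rw [f1] at a1
  rw [f2] at a2
  unfold bx
  simp only [Nat.add_sub_cancel]
  rw [a1, a2, a3, a4]
  abel

theorem tab_min {n : ℕ} {ι : ℕ → ℕ} {γ : ℚ} {k : ℕ} {j : ℕ → ℕ} {s : ℤ} (hk : k < n)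
    (hj : ∀ i, 1 ≤ i → i ≤ k → j i = i) :
    tab (bx ι n γ) s k j = yv ι n s k := by
  have key : ∀ m, m ≤ k → ∑ i ∈ Finset.Icc 1 m, bx ι n γ (s + k - i) (j i)
      = Zv ι n γ (s + k - m) m := by
    intro m
    induction m with
    | zero =>
      intro _
      have : col n 0 = 0 := by unfold col; omega
      simp [Zv, this, yv_zero]
    | succ m ih =>
      intro hm
      rw [Finset.sum_Icc_succ_top (by omega), ih (by omega), hj (m + 1) (by omega) hm]
      unfold bx
      have : s + k - ((m + 1 : ℕ) : ℤ) + 1 = s + k - m := by omega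
      rw [this, Nat.add_sub_cancel]
      abel
  unfold tab
  rw [key k le_rfl]
  unfold Zv
  have c1 : col n k = k := by unfold col; omega
  have w1 : cw n γ k = 1 := by unfold cw; rw [if_neg (by omega)]
  rw [c1, w1, one_smul]
  congr 1; omega

theorem reach {n ι A γ} (h : Ctx n ι A γ) {k : ℕ} {s : ℤ} (hk1 : 1 ≤ k)
    (hkn : k < n) (hs : 1 - (PABC ι n k : ℤ) ≤ s) :
    ∀ (N : ℕ) (j : ℕ → ℕ), wt n k j = N → Good n k j →
      XiMemFrom A ι { ψ | ∃ r, 1 ≤ r ∧ ψ = xc (occPos ι k r) } (tab (bx ι n γ) s k j) := by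
  intro N
  induction N using Nat.strong_induction_on with
  | _ N IH0 =>
  intro j hN hj
  have IH : ∀ j', Good n k j' → wt n k j' < wt n k j →
      XiMemFrom A ι { ψ | ∃ r, 1 ≤ r ∧ ψ = xc (occPos ι k r) } (tab (bx ι n γ) s k j') :=
    fun j' g l => IH0 _ (hN ▸ l) j' rfl g
  by_cases hall : ∀ i, 1 ≤ i → i ≤ k → j i = i
  · rw [tab_min hkn hall]
    apply XiMemFrom.base
    refine ⟨(s + (PABC ι n k : ℤ)).toNat, by omega, ?_⟩
    unfold yv xsj
    rw [if_pos ⟨by omega, hk1, by omega⟩]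
  · have hex : ∃ i, 1 ≤ i ∧ i ≤ k ∧ j i ≠ i := by push Not at hall; exact hall
    classical
    obtain ⟨h1, h2, h3⟩ := Nat.find_spec hex
    have hmin : ∀ m, m < Nat.find hex → 1 ≤ m → j m = m := by
      intro m hm hm1
      by_contra hne
      exact Nat.find_min hex hm ⟨hm1, by omega, hne⟩
    generalize Nat.find hex = i at *
    have hge := hj.ge i h1 h2
    obtain ⟨hb1, hb2⟩ := hj.1 i h1 h2
    obtain ⟨e, he⟩ : ∃ e, j i = e + 1 := ⟨j i - 1, by omega⟩
    have h0 : 1 ≤ e := by omega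
    have hprev : 1 < i → j (i - 1) ≠ e := by
      intro hi
      rw [hmin (i - 1) (by omega) (by omega)]
      omega
    by_cases hen : e = n
    · exact good_move h hkn.le hs hj IH h1 h2 he h0 hprev (Or.inl hen)
    rcases ctr_cases hj (2 * n - e) (i + n - e) with hc | ⟨hc, l, hl1, hl2, hl, hjl, hnext⟩ |
        ⟨hc, l, hl1, hl2, hl, hjl, hlprev⟩
    · exact good_move h hkn.le hs hj IH h1 h2 he h0 hprev (Or.inr hc)
    · rcases lt_or_gt_of_ne hen with hlt | hgt
      · skip
        have g1 := hj.down h1 h2 he h0 hprev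
        have hli : l ≠ i := by omega
        have hjl' : Function.update j i e l = 2 * n - e := by
          rw [Function.update_of_ne hli, hjl]
        have g2 : Good n k (Function.update (Function.update j i e) l (2 * n - e + 1)) := by
          apply g1.up hl1 hl2 hjl' (by omega)
          intro hlk
          rw [Function.update_of_ne (by omega)]
          exact hnext hlk
        have w1 := wt_update n j e h1 h2
        have w2 := wt_update n (Function.update j i e) (2 * n - e + 1) hl1 hl2
        rw [hjl'] at w2
        rw [he] at w1
        have wl : wt n k (Function.update (Function.update j i e) l (2 * n - e + 1))
            < wt n k j := by
          obtain ⟨a, rfl⟩ : ∃ a, n = e + 1 + a := ⟨n - (e + 1), by omega⟩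
          have q1 : 2 * (e + 1 + a) - e = e + 2 + 2 * a := by omega
          have q2 : 4 * (e + 1 + a) - (e + 1) = 3 * e + 3 + 4 * a := by omega
          have q3 : 4 * (e + 1 + a) - e = 3 * e + 4 + 4 * a := by omega
          have q4 : 4 * (e + 1 + a) - (e + 2 + 2 * a) = 3 * e + 2 + 2 * a := by omega
          have q5 : 4 * (e + 1 + a) - (e + 2 + 2 * a + 1) = 3 * e + 1 + 2 * a := by omega
          rw [q2, q3] at w1
          rw [q1, q4, q5] at w2
          rw [q1]
          nlinarith
        have := IH _ g2 wl
        rw [tab_update _ _ _ _ hl1 hl2, hjl', tab_update _ _ _ _ h1 h2, he] at this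
        have hsw := bx_swap (ι := ι) (n := n) γ (s + k - i) (s + k - l) h0 hlt (by omega)
        have heq : tab (bx ι n γ) s k j - bx ι n γ (s + k - i) (e + 1) + bx ι n γ (s + k - i) e
            - bx ι n γ (s + k - l) (2 * n - e) + bx ι n γ (s + k - l) (2 * n - e + 1)
            = tab (bx ι n γ) s k j := by
          have : tab (bx ι n γ) s k j - bx ι n γ (s + k - i) (e + 1) + bx ι n γ (s + k - i) e
            - bx ι n γ (s + k - l) (2 * n - e) + bx ι n γ (s + k - l) (2 * n - e + 1)
            = tab (bx ι n γ) s k j - (bx ι n γ (s + k - i) (e + 1)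
              + bx ι n γ (s + k - l) (2 * n - e))
              + (bx ι n γ (s + k - i) e + bx ι n γ (s + k - l) (2 * n - e + 1)) := by abel
          rw [this, hsw]; abel
        rw [heq] at this
        exact this
      · exfalso
        have := hmin l (by omega) hl1
        omega
    · refine good_move h hkn.le hs hj IH hl1 hl2 hjl (by omega) hlprev (Or.inr ?_)
      have q1 : 2 * n - (2 * n - e) = e := by omega
      have q2 : (l : ℤ) + n - ((2 * n - e : ℕ) : ℤ) = i + 1 := by omega
      rw [q1, q2]
      unfold ctr ind
      have t1 : ((i : ℤ) + 1).toNat = i + 1 := by omega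
      have t2 : ((i : ℤ) + 1 + 1).toNat = i + 2 := by omega
      rw [t1, t2, if_neg, if_neg]
      · rfl
      · rintro ⟨_, a, b⟩
        have := hj.lt h1 (show i < i + 2 by omega) (by omega)
        omega
      · rintro ⟨_, a, b⟩
        have := hj.lt h1 (show i < i + 1 by omega) (by omega)
        omega

theorem main {n ι A γ} (h : Ctx n ι A γ) (box : ℤ → ℕ → ℕ → ℚ)
    (hbox : ∀ t e, 1 ≤ e → e ≤ 2 * n → box t e = bx ι n γ t e)
    (k : ℕ) (hk1 : 1 ≤ k) (hk2 : k ≤ n - 1) :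
      { φ : ℕ → ℚ |
          XiMemFrom A ι { ψ | ∃ r, 1 ≤ r ∧ ψ = xc (occPos ι k r) } φ } =
      { T : ℕ → ℚ | ∃ (s : ℤ) (j : ℕ → ℕ),
          (∀ i, 1 ≤ i → i ≤ k → 1 ≤ j i ∧ j i ≤ 2 * n) ∧
          (∀ i, 1 ≤ i → i < k → j i < j (i + 1)) ∧
          1 - (PABC ι n k : ℤ) ≤ s ∧
          T = tab box s k j } := by
  have hn := h.hn
  have htab : ∀ s j, Good n k j → tab box s k j = tab (bx ι n γ) s k j := by
    intro s j hj
    unfold tab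
    apply Finset.sum_congr rfl
    intro i hi
    rw [Finset.mem_Icc] at hi
    exact hbox _ _ (hj.1 i hi.1 hi.2).1 (hj.1 i hi.1 hi.2).2
  apply Set.Subset.antisymm
  · intro φ hφ
    change XiMemFrom A ι _ φ at hφ
    induction hφ with
    | base φ hφ =>
      obtain ⟨r, hr, rfl⟩ := hφ
      have hg : Good n k (fun i => i) := ⟨fun i a b => by dsimp only; omega, fun i a b => by simp⟩
      refine ⟨r - PABC ι n k, fun i => i, hg.1, hg.2, by omega, ?_⟩
      rw [htab _ _ hg, tab_min (by omega) (fun _ _ _ => rfl)]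
      unfold yv xsj
      rw [if_pos ⟨by omega, hk1, by omega⟩]
      congr 2; omega
    | step q hq φ _ ih =>
      obtain ⟨s, j, a, b, hs, rfl⟩ := ih
      rw [htab _ _ ⟨a, b⟩]
      obtain ⟨j', g', e'⟩ := closure_step h ⟨a, b⟩ hq (s := s)
      exact ⟨s, j', g'.1, g'.2, hs, by rw [e', htab _ _ g']⟩
  · rintro T ⟨s, j, a, b, hs, rfl⟩
    rw [htab _ _ ⟨a, b⟩]
    exact reach h hk1 (by omega) hs _ j rfl ⟨a, b⟩

theorem ctxB {n : ℕ} {ι : ℕ → ℕ} (hn : 2 ≤ n) (hadm : Admissible n ι)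
    (had : Adapted n (cartanB n) ι) : Ctx n ι (cartanB n) 1 where
  hn := hn
  hadm := hadm
  had := had
  hγ := by norm_num
  hA0 := by intro c d a b e; unfold cartanB; split_ifs <;> first | omega | rfl
  hAup := by
    intro c a b; unfold cartanB
    rw [if_neg (by omega), if_neg (by omega), if_pos (by omega)]; simp
  hAdn := by
    intro c a b
    have v : cartanB n c (c - 1) = if c = n then -2 else -1 := by
      unfold cartanB; split_ifs <;> first | omega | rfl
    rw [v]; split_ifs <;> norm_num

theorem ctxC {n : ℕ} {ι : ℕ → ℕ} (hn : 2 ≤ n) (hadm : Admissible n ι)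
    (had : Adapted n (cartanC n) ι) : Ctx n ι (cartanC n) 2 where
  hn := hn
  hadm := hadm
  had := had
  hγ := by norm_num
  hA0 := by intro c d a b e; unfold cartanC; split_ifs <;> first | omega | rfl
  hAup := by
    intro c a b; unfold cartanC
    rw [if_neg (by omega)]
    by_cases hc : c + 1 = n
    · rw [if_pos (by omega), if_pos hc]; norm_num
    · rw [if_neg (by omega), if_pos (by omega), if_neg hc]; norm_num
  hAdn := by
    intro c a b
    have v : cartanC n c (c - 1) = -1 := by
      unfold cartanC; split_ifs <;> first | omega | rfl
    rw [v]; split_ifs <;> norm_num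

end XiBC

/-- Lemma 5.4: in types B and C, for `k ∈ [1,n-1]`, the forms obtained from the `x_{r,k}`
(`r ≥ 1`) by the operators `S_l` are exactly the `k`-row tableaux all of whose entries lie
in `J_X` (entries encoded in `[1,2n]`, so in type C no entry equals `ovl(n+1)`). -/
theorem xi_from_xrk_BC (n : ℕ) (hn : 2 ≤ n) (ι : ℕ → ℕ) (hadm : Admissible n ι) :
    (Adapted n (cartanB n) ι → ∀ k, 1 ≤ k → k ≤ n - 1 →
      { φ : ℕ → ℚ |
          XiMemFrom (cartanB n) ι { ψ | ∃ r, 1 ≤ r ∧ ψ = xc (occPos ι k r) } φ } =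
      { T : ℕ → ℚ | ∃ (s : ℤ) (j : ℕ → ℕ),
          (∀ i, 1 ≤ i → i ≤ k → 1 ≤ j i ∧ j i ≤ 2 * n) ∧
          (∀ i, 1 ≤ i → i < k → j i < j (i + 1)) ∧
          1 - (PABC ι n k : ℤ) ≤ s ∧
          T = tab (boxB ι n) s k j }) ∧
    (Adapted n (cartanC n) ι → ∀ k, 1 ≤ k → k ≤ n - 1 →
      { φ : ℕ → ℚ |
          XiMemFrom (cartanC n) ι { ψ | ∃ r, 1 ≤ r ∧ ψ = xc (occPos ι k r) } φ } =
      { T : ℕ → ℚ | ∃ (s : ℤ) (j : ℕ → ℕ),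
          (∀ i, 1 ≤ i → i ≤ k → 1 ≤ j i ∧ j i ≤ 2 * n) ∧
          (∀ i, 1 ≤ i → i < k → j i < j (i + 1)) ∧
          1 - (PABC ι n k : ℤ) ≤ s ∧
          T = tab (boxC ι n) s k j }) := by
  refine ⟨fun had k h1 h2 => ?_, fun had k h1 h2 => ?_⟩
  · exact XiBC.main (XiBC.ctxB hn hadm had) (boxB ι n) (fun t e a b => XiBC.boxB_eq hn t a b) k h1 h2
  · exact XiBC.main (XiBC.ctxC hn hadm had) (boxC ι n) (fun t e a b => XiBC.boxC_eq hn t a b) k h1 h2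
end
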